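/- arXiv:0907.3740 — 5 statements merged into one kernel-verified Lean document; each statement's English description precedes it below -/
import Mathlib

section
/- Let Z, Z_1, ..., Z_n (with n ≥ 2) be i.i.d. random variables with values in [0,1] and let δ > 0. Then with probability at least 1 − δ in the i.i.d. vector Z = (Z_1, ..., Z_n) one has E[Z] − (1/n)∑_{i=1}^n Z_i ≤ sqrt(2 V_n(Z) ln(2/δ) / n) + 7 ln(2/δ) / (3(n−1)). -/
/-!
With `L = ln(2/δ)` and `V` the variance of `μ`, two events, each of probability at least
`1 - δ/2`, are combined.

* Bernstein's inequality for the mean (`sampleMean_lower_tail`):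
  `𝔼Z - Pₙ ≤ √(2VL/n) + L/(3n)`.
* A lower tail bound for the sample variance (`sampleVar_lower_tail`):
  `√V ≤ √Vₙ + √(2L/(n-1))`.

Substituting the second into the first costs `√(2L/n) √(2L/(n-1)) ≤ 2L/(n-1)`, and
`2 + 1/3 = 7/3`.

The tail bound for `Vₙ` comes from Hoeffding's averaging of U-statistics. With `M = ⌊n/2⌋`, the
number `M Vₙ(z)` is the average over permutations `σ` of `∑_{k<M} (z_{σ(2k)} - z_{σ(2k+1)})²/2`
(`sampleVar_eq_average`). By convexity of `exp`, the Laplace transform of `M Vₙ` is at most the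
average of those of these sums, whose terms are independent, lie in `[0, 1/2]` and have mean `V`.
Since `exp(-x) ≤ 1 - x + x²/2` for `x ≥ 0`, each term contributes at most `exp(-sV + s²V/4)`. The
Chernoff bound then gives `P(V - Vₙ ≥ t) ≤ exp(-M t²/V) ≤ exp(-(n-1)t²/(2V))`, and
`t = √(2VL/(n-1))` is the claim after completing to square roots.
-/

open MeasureTheory

/-- Sample mean `P_n(x) = (1/n) ∑ᵢ xᵢ`. -/
noncomputable def sampleMean (n : ℕ) (x : Fin n → ℝ) : ℝ := (∑ i, x i) / n

/-- Sample variance `V_n(x) = (1/(n(n-1))) ∑_{i<j} (xᵢ - xⱼ)² = (1/(2n(n-1))) ∑_{i,j} (xᵢ - xⱼ)²`. -/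
noncomputable def sampleVar (n : ℕ) (x : Fin n → ℝ) : ℝ :=
  (∑ i, ∑ j, (x i - x j) ^ 2) / (2 * (n : ℝ) * ((n : ℝ) - 1))

open ProbabilityTheory

/-! ### Elementary bounds on the exponential -/

/-- Follows from `1 + x + x²/2 ≤ exp x` and `(1 + x + x²/2)(1 - x + x²/2) = 1 + x⁴/4 ≥ 1`. -/
lemma exp_neg_le_quadratic {x : ℝ} (hx : 0 ≤ x) : Real.exp (-x) ≤ 1 - x + x ^ 2 / 2 := by
  have h := Real.quadratic_le_exp_of_nonneg hx
  rw [Real.exp_neg, inv_le_iff_one_le_mul₀ (Real.exp_pos x)]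
  have h1 : (0 : ℝ) ≤ 1 - x + x ^ 2 / 2 := by nlinarith [sq_nonneg (x - 1)]
  nlinarith [mul_le_mul_of_nonneg_left h h1, sq_nonneg (x ^ 2)]

/-- Denominator-free form of `exp x ≤ 1 + x + (x²/2)/(1 - x/3)`. The two sides agree at `0`, and
the derivative of their difference is nonnegative because `1 + x + x²/2 ≤ exp x`. -/
lemma exp_mul_le_bernstein {x : ℝ} (hx : 0 ≤ x) :
    6 - 2 * x ≤ Real.exp (-x) * (6 + 4 * x + x ^ 2) := by
  have hd : ∀ y : ℝ, HasDerivAt (fun y : ℝ => Real.exp (-y) * (6 + 4 * y + y ^ 2) + 2 * y)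
      (2 - Real.exp (-y) * (y ^ 2 + 2 * y + 2)) y := by
    intro y
    have h1 : HasDerivAt (fun y : ℝ => Real.exp (-y)) (Real.exp (-y) * (-1)) y :=
      (hasDerivAt_neg y).exp
    have h2 : HasDerivAt (fun y : ℝ => 6 + 4 * y + y ^ 2) (4 * 1 + 2 * y) y := by
      have := (((hasDerivAt_id y).const_mul 4).const_add 6).add (hasDerivAt_pow 2 y)
      refine this.congr_deriv ?_
      norm_num
    have h3 := (h1.mul h2).add ((hasDerivAt_id y).const_mul 2)
    refine h3.congr_deriv ?_
    ring
  have hm : MonotoneOn (fun y : ℝ => Real.exp (-y) * (6 + 4 * y + y ^ 2) + 2 * y) (Set.Ici 0) := by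
    refine monotoneOn_of_deriv_nonneg (convex_Ici 0)
      (fun y _ => (hd y).continuousAt.continuousWithinAt)
      (fun y _ => (hd y).differentiableAt.differentiableWithinAt) ?_
    intro y hy
    rw [interior_Ici] at hy
    rw [(hd y).deriv]
    have h := Real.quadratic_le_exp_of_nonneg (le_of_lt hy)
    have h2 := mul_le_mul_of_nonneg_left h (Real.exp_pos (-y)).le
    rw [← Real.exp_add, neg_add_cancel, Real.exp_zero] at h2
    nlinarith
  have := hm (Set.mem_Ici.2 le_rfl) (Set.mem_Ici.2 hx) hx
  simp at this
  linarith

/-- The pointwise bound behind Bernstein's inequality; `3 / (6 - 2l)` is `(1/2) / (1 - l/3)`. -/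
lemma exp_le_bernstein {x l : ℝ} (hxl : x ≤ l) (h0 : 0 ≤ l) (hl : l < 3) :
    Real.exp x ≤ 1 + x + x ^ 2 * (3 / (6 - 2 * l)) := by
  have hpos : 0 < 6 - 2 * l := by linarith
  rcases le_total x 0 with hx | hx
  · have h := exp_neg_le_quadratic (neg_nonneg.2 hx)
    rw [neg_neg] at h
    have h2 : (1 : ℝ) / 2 ≤ 3 / (6 - 2 * l) := by
      rw [div_le_div_iff₀ two_pos hpos]; linarith
    nlinarith [mul_le_mul_of_nonneg_left h2 (sq_nonneg x)]
  · have h := exp_mul_le_bernstein hx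
    have hposx : 0 < 6 - 2 * x := by linarith
    have h1 : Real.exp x * (6 - 2 * x) ≤ 6 + 4 * x + x ^ 2 := by
      have := mul_le_mul_of_nonneg_left h (Real.exp_pos x).le
      rwa [← mul_assoc, ← Real.exp_add, add_neg_cancel, Real.exp_zero, one_mul] at this
    have h2 : Real.exp x ≤ 1 + x + x ^ 2 * (3 / (6 - 2 * x)) := by
      have : 1 + x + x ^ 2 * (3 / (6 - 2 * x)) = (6 + 4 * x + x ^ 2) / (6 - 2 * x) := by
        have := hposx.ne'
        rw [eq_div_iff this, add_mul, mul_assoc, div_mul_cancel₀ _ this]; ring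
      rw [this, le_div_iff₀ hposx]; exact h1
    have h3 : 3 / (6 - 2 * x) ≤ 3 / (6 - 2 * l) := by gcongr
    nlinarith [mul_le_mul_of_nonneg_left h3 (sq_nonneg x)]

/-! ### The sample variance as an average over permutations -/

lemma exists_perm_pair {n : ℕ} {i j i' j' : Fin n} (h : i ≠ j) (h' : i' ≠ j') :
    ∃ τ : Equiv.Perm (Fin n), τ i = i' ∧ τ j = j' := by
  refine ⟨(Equiv.swap i i').trans (Equiv.swap (Equiv.swap i i' j) j'), ?_, ?_⟩
  · have h1 : i' ≠ Equiv.swap i i' j := by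
      intro hc
      have : Equiv.swap i i' i = Equiv.swap i i' j := by rw [Equiv.swap_apply_left]; exact hc
      exact h ((Equiv.swap i i').injective this)
    simp [Equiv.swap_apply_of_ne_of_ne h1 h']
  · simp

/-- Averaging `f (σ i) (σ j)` over all permutations gives the mean of `f` over ordered pairs of
distinct indices: the sum over `σ` does not depend on the pair `i ≠ j`. -/
lemma sum_perm_pair {n : ℕ} (f : Fin n → Fin n → ℝ) (hf : ∀ i, f i i = 0)
    {i j : Fin n} (hij : i ≠ j) :
    (n : ℝ) * (n - 1) * ∑ σ : Equiv.Perm (Fin n), f (σ i) (σ j)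
      = Fintype.card (Equiv.Perm (Fin n)) * ∑ a, ∑ b, f a b := by
  set S := ∑ σ : Equiv.Perm (Fin n), f (σ i) (σ j) with hS
  have h1 : ∀ a b : Fin n, ∑ σ : Equiv.Perm (Fin n), f (σ a) (σ b) = S - if a = b then S else 0 := by
    intro a b
    split_ifs with hab
    · subst hab; simp [hf]
    · obtain ⟨τ, h1, h2⟩ := exists_perm_pair hij hab
      rw [sub_zero, hS, ← h1, ← h2]
      exact Equiv.sum_comp (Equiv.mulRight τ) (fun σ : Equiv.Perm (Fin n) => f (σ i) (σ j))
  have h2 : ∑ a, ∑ b, ∑ σ : Equiv.Perm (Fin n), f (σ a) (σ b) = (n : ℝ) * (n - 1) * S := by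
    simp only [h1, Finset.sum_sub_distrib, Finset.sum_ite_eq, Finset.sum_const, Finset.card_univ,
      Fintype.card_fin, nsmul_eq_mul, Finset.mem_univ, if_true]
    ring
  rw [← h2]
  have h3 : ∑ a, ∑ b, ∑ σ : Equiv.Perm (Fin n), f (σ a) (σ b)
      = ∑ σ : Equiv.Perm (Fin n), ∑ a, ∑ b, f (σ a) (σ b) := by
    rw [Finset.sum_comm]
    simp_rw [Finset.sum_comm (s := Finset.univ (α := Fin n)) (t := Finset.univ (α := Equiv.Perm (Fin n)))]
    exact Finset.sum_congr rfl fun σ _ => Finset.sum_comm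
  rw [h3, Finset.sum_congr rfl (g := fun _ => ∑ a, ∑ b, f a b)]
  · simp
  · intro σ _
    rw [← Equiv.sum_comp σ (fun a => ∑ b, f a b)]
    exact Finset.sum_congr rfl fun a _ => Equiv.sum_comp σ (fun b => f (σ a) b)

/-- The left end of the `k`-th pair of consecutive indices `(2k, 2k+1)`. -/
def pairFst (n : ℕ) (k : Fin (n / 2)) : Fin n := ⟨2 * k, by omega⟩

/-- The right end of the `k`-th pair of consecutive indices `(2k, 2k+1)`. -/
def pairSnd (n : ℕ) (k : Fin (n / 2)) : Fin n := ⟨2 * k + 1, by omega⟩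

lemma pairFst_ne_pairSnd {n : ℕ} (k l : Fin (n / 2)) : pairFst n k ≠ pairSnd n l := by
  simp only [pairFst, pairSnd, ne_eq, Fin.mk.injEq]; omega

/-- Hoeffding's representation of the U-statistic `Vₙ` as an average of sums over `⌊n/2⌋` disjoint
pairs. -/
lemma sampleVar_eq_average {n : ℕ} (hn : 2 ≤ n) (z : Fin n → ℝ) :
    ((n / 2 : ℕ) : ℝ) * sampleVar n z = ∑ σ : Equiv.Perm (Fin n),
      (Fintype.card (Equiv.Perm (Fin n)) : ℝ)⁻¹ *
        ∑ k : Fin (n / 2), (z (σ (pairFst n k)) - z (σ (pairSnd n k))) ^ 2 / 2 := by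
  have hn' : (2 : ℝ) ≤ n := by exact_mod_cast hn
  have h0 : (n : ℝ) ≠ 0 := by positivity
  have h1 : (n : ℝ) - 1 ≠ 0 := by linarith
  have hc : (Fintype.card (Equiv.Perm (Fin n)) : ℝ) ≠ 0 := by
    exact_mod_cast Fintype.card_ne_zero
  rw [← Finset.mul_sum, Finset.sum_comm]
  have h2 : ∀ k : Fin (n / 2), ∑ σ : Equiv.Perm (Fin n),
      (z (σ (pairFst n k)) - z (σ (pairSnd n k))) ^ 2 / 2 =
        Fintype.card (Equiv.Perm (Fin n)) * sampleVar n z := by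
    intro k
    have h := sum_perm_pair (fun a b => (z a - z b) ^ 2 / 2) (by simp) (pairFst_ne_pairSnd k k)
    simp only [← Finset.sum_div] at h ⊢
    rw [sampleVar]
    field_simp
    field_simp at h
    linarith
  simp only [h2, Finset.sum_const, Finset.card_univ, Fintype.card_fin, nsmul_eq_mul]
  field_simp

/-! ### Exponential moments and tail bounds -/

section Tails

variable {n : ℕ} {μ : Measure ℝ} [IsProbabilityMeasure μ]

lemma ae_eval_of_ae {p : ℝ → Prop} (h : ∀ᵐ x ∂μ, p x) (i : Fin n) :
    ∀ᵐ z ∂(Measure.pi fun _ : Fin n => μ), p (z i) :=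
  (Measure.quasiMeasurePreserving_eval (fun _ : Fin n => μ) i).ae h

lemma memLp_of_unit (hrange : ∀ᵐ x ∂μ, x ∈ Set.Icc (0 : ℝ) 1) : MemLp (fun x : ℝ => x) 2 μ :=
  memLp_of_bounded hrange aestronglyMeasurable_id 2

lemma memLp_eval (hrange : ∀ᵐ x ∂μ, x ∈ Set.Icc (0 : ℝ) 1) (i : Fin n) :
    MemLp (fun z : Fin n → ℝ => z i) 2 (Measure.pi fun _ : Fin n => μ) :=
  memLp_of_bounded (ae_eval_of_ae hrange i) (measurable_pi_apply i).aestronglyMeasurable 2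

lemma iIndepFun_eval : iIndepFun (fun (i : Fin n) (z : Fin n → ℝ) => z i)
    (Measure.pi fun _ : Fin n => μ) :=
  iIndepFun_pi (X := fun _ => id) (fun _ => aemeasurable_id)

lemma variance_eval (i : Fin n) :
    Var[fun z : Fin n → ℝ => z i; Measure.pi fun _ : Fin n => μ] = Var[fun x : ℝ => x; μ] :=
  (measurePreserving_eval (fun _ : Fin n => μ) i).variance_fun_comp (f := fun x => x)
    aemeasurable_id

lemma integral_sq_sub (hrange : ∀ᵐ x ∂μ, x ∈ Set.Icc (0 : ℝ) 1) {i j : Fin n} (hij : i ≠ j) :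
    ∫ z : Fin n → ℝ, (z i - z j) ^ 2 ∂(Measure.pi fun _ : Fin n => μ)
      = 2 * Var[fun x : ℝ => x; μ] := by
  have hi := memLp_eval hrange i
  have hj := memLp_eval hrange j
  rw [← variance_of_integral_eq_zero (X := fun z : Fin n → ℝ => z i - z j),
    variance_fun_sub hi hj, (iIndepFun_eval.indepFun hij).covariance_eq_zero hi hj,
    variance_eval, variance_eval]
  · ring
  · exact (hi.sub hj).aemeasurable
  · rw [integral_sub (hi.integrable (by norm_num)) (hj.integrable (by norm_num)),
      integral_eval, integral_eval, sub_self]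

/-- For `Y = (zᵢ - zⱼ)²/2` one has `0 ≤ Y ≤ 1/2`, hence `Y² ≤ Y/2`, and `𝔼Y` is the variance of `μ`. -/
lemma integral_exp_pair_le (hrange : ∀ᵐ x ∂μ, x ∈ Set.Icc (0 : ℝ) 1) {i j : Fin n} (hij : i ≠ j)
    {s : ℝ} (hs : 0 ≤ s) :
    ∫ z : Fin n → ℝ, Real.exp (-(s * ((z i - z j) ^ 2 / 2))) ∂(Measure.pi fun _ : Fin n => μ)
      ≤ Real.exp (-(s * Var[fun x : ℝ => x; μ]) + s ^ 2 * Var[fun x : ℝ => x; μ] / 4) := by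
  have hint : Integrable (fun z : Fin n → ℝ => (z i - z j) ^ 2)
      (Measure.pi fun _ : Fin n => μ) :=
    ((memLp_eval hrange i).sub (memLp_eval hrange j)).integrable_sq
  have h1 : ∫ z : Fin n → ℝ, Real.exp (-(s * ((z i - z j) ^ 2 / 2)))
        ∂(Measure.pi fun _ : Fin n => μ)
      ≤ ∫ z : Fin n → ℝ, (1 - (s / 2 - s ^ 2 / 8) * (z i - z j) ^ 2)
        ∂(Measure.pi fun _ : Fin n => μ) := by
    refine integral_mono_ae ?_ ((integrable_const _).sub (hint.const_mul _)) ?_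
    · refine Integrable.of_bound (by fun_prop) 1 (.of_forall fun z => ?_)
      rw [Real.norm_eq_abs, Real.abs_exp, Real.exp_le_one_iff]
      have : 0 ≤ s * ((z i - z j) ^ 2 / 2) := by positivity
      linarith
    · filter_upwards [ae_eval_of_ae hrange i, ae_eval_of_ae hrange j] with z hi hj
      have hD : (z i - z j) ^ 2 ≤ 1 := by
        rw [sq_le_one_iff_abs_le_one, abs_le]
        constructor <;> linarith [hi.1, hi.2, hj.1, hj.2]
      have h0 := sq_nonneg (z i - z j)
      have := exp_neg_le_quadratic (x := s * ((z i - z j) ^ 2 / 2)) (by positivity)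
      have h2 := mul_le_mul_of_nonneg_left (mul_le_mul_of_nonneg_left hD h0) (sq_nonneg s)
      refine this.trans ?_
      nlinarith
  refine h1.trans ?_
  rw [integral_sub (integrable_const _) (hint.const_mul _), integral_const_mul,
    integral_sq_sub hrange hij]
  simp only [integral_const, probReal_univ, smul_eq_mul]
  have := Real.add_one_le_exp
    (-(s * Var[fun x : ℝ => x; μ]) + s ^ 2 * Var[fun x : ℝ => x; μ] / 4)
  linarith

/-- Functions of pairwise disjoint pairs of coordinates are independent, so the expectation of
their product factorizes. -/
lemma integral_prod_pairs {ι : Type*} (g : ℝ → ℝ → ℝ) (hg : Measurable (Function.uncurry g))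
    {a b : ι → Fin n} (ha : a.Injective) (hb : b.Injective) (hab : ∀ k l, a k ≠ b l)
    (t : Finset ι) :
    ∫ z : Fin n → ℝ, ∏ k ∈ t, g (z (a k)) (z (b k)) ∂(Measure.pi fun _ : Fin n => μ)
      = ∏ k ∈ t, ∫ z : Fin n → ℝ, g (z (a k)) (z (b k)) ∂(Measure.pi fun _ : Fin n => μ) := by
  classical
  have hgm : ∀ k, Measurable fun z : Fin n → ℝ => g (z (a k)) (z (b k)) := fun k =>
    hg.comp (g := Function.uncurry g) (f := fun z : Fin n → ℝ => (z (a k), z (b k)))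
      ((measurable_pi_apply (a k)).prodMk (measurable_pi_apply (b k)))
  induction t using Finset.induction_on with
  | empty => simp
  | insert k t hk ih =>
    simp only [Finset.prod_insert hk]
    rw [← ih]
    set S : Finset (Fin n) := {a k, b k}
    set T : Finset (Fin n) := t.image a ∪ t.image b with hT
    have hST : Disjoint S T := by
      rw [Finset.disjoint_left]
      intro x hx hx'
      simp only [S, T, Finset.mem_insert, Finset.mem_singleton, Finset.mem_union,
        Finset.mem_image] at hx hx'
      rcases hx with rfl | rfl <;> rcases hx' with ⟨l, hl, h⟩ | ⟨l, hl, h⟩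
      · exact hk (ha h ▸ hl)
      · exact hab _ _ h.symm
      · exact hab _ _ h
      · exact hk (hb h ▸ hl)
    have hind := (iIndepFun_eval (n := n) (μ := μ)).indepFun_finset S T hST
      (fun i => measurable_pi_apply i)
    -- Extension of a subvector by zero: it turns a function of `z` that uses only coordinates in `U`
    -- into a function of the restriction of `z` to `U`.
    let ext : (U : Finset (Fin n)) → (U → ℝ) → Fin n → ℝ :=
      fun U w i => if h : i ∈ U then w ⟨i, h⟩ else 0
    have hext : ∀ U, Measurable (ext U) := by
      intro U
      refine measurable_pi_lambda _ fun i => ?_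
      by_cases h : i ∈ U
      · simpa [ext, h] using measurable_pi_apply (X := fun _ : U => ℝ) ⟨i, h⟩
      · simp [ext, h]
    have hind2 := hind.comp ((hgm k).comp (hext S))
      ((Finset.measurable_fun_prod t fun l _ => hgm l).comp (hext T))
    have e1 : ((fun z : Fin n → ℝ => g (z (a k)) (z (b k))) ∘ ext S) ∘
        (fun (z : Fin n → ℝ) (i : S) => z i) = fun z => g (z (a k)) (z (b k)) := by
      funext z
      simp [ext, S]
    have e2 : ((fun z : Fin n → ℝ => ∏ l ∈ t, g (z (a l)) (z (b l))) ∘ ext T) ∘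
        (fun (z : Fin n → ℝ) (i : T) => z i) = fun z => ∏ l ∈ t, g (z (a l)) (z (b l)) := by
      funext z
      refine Finset.prod_congr rfl fun l hl => ?_
      have h1 : a l ∈ T := Finset.mem_union_left _ (Finset.mem_image_of_mem a hl)
      have h2 : b l ∈ T := Finset.mem_union_right _ (Finset.mem_image_of_mem b hl)
      simp [ext, h1, h2]
    rw [e1, e2] at hind2
    exact hind2.integral_fun_mul_eq_mul_integral (hgm k).aestronglyMeasurable
      (Finset.measurable_fun_prod t fun l _ => hgm l).aestronglyMeasurable

lemma measurable_sampleVar : Measurable (sampleVar n) := by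
  unfold sampleVar
  fun_prop

lemma sampleVar_nonneg (hn : 2 ≤ n) (z : Fin n → ℝ) : 0 ≤ sampleVar n z := by
  have hn' : (2 : ℝ) ≤ n := by exact_mod_cast hn
  refine div_nonneg (by positivity) (mul_nonneg (by positivity) (by linarith))

/-- Bound on the Laplace transform of `⌊n/2⌋ Vₙ`, by Jensen's inequality for the average over
permutations and independence of the disjoint pairs. -/
lemma integral_exp_sampleVar_le (hn : 2 ≤ n) (hrange : ∀ᵐ x ∂μ, x ∈ Set.Icc (0 : ℝ) 1)
    {s : ℝ} (hs : 0 ≤ s) :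
    ∫ z, Real.exp (-(s * (((n / 2 : ℕ) : ℝ) * sampleVar n z))) ∂(Measure.pi fun _ : Fin n => μ)
      ≤ Real.exp (((n / 2 : ℕ) : ℝ) *
        (-(s * Var[fun x : ℝ => x; μ]) + s ^ 2 * Var[fun x : ℝ => x; μ] / 4)) := by
  set c : ℝ := (Fintype.card (Equiv.Perm (Fin n)) : ℝ)⁻¹ with hc
  have hc0 : 0 ≤ c := by positivity
  have hcard : (Fintype.card (Equiv.Perm (Fin n)) : ℝ) ≠ 0 := by
    exact_mod_cast Fintype.card_ne_zero
  set B := -(s * Var[fun x : ℝ => x; μ]) + s ^ 2 * Var[fun x : ℝ => x; μ] / 4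
  let g : ℝ → ℝ → ℝ := fun x y => Real.exp (-(s * ((x - y) ^ 2 / 2)))
  have hg : Measurable (Function.uncurry g) := by
    unfold g Function.uncurry
    fun_prop
  have hg0 : ∀ x y, 0 ≤ g x y := fun x y => (Real.exp_pos _).le
  have hg1 : ∀ x y, g x y ≤ 1 := by
    intro x y
    have : 0 ≤ s * ((x - y) ^ 2 / 2) := by positivity
    exact Real.exp_le_one_iff.2 (by linarith)
  have hgm : ∀ i j : Fin n, Measurable fun z : Fin n → ℝ => g (z i) (z j) := by
    intro i j
    unfold g
    fun_prop
  have hint : ∀ σ : Equiv.Perm (Fin n), Integrable (fun z : Fin n → ℝ =>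
      ∏ k, g (z (σ (pairFst n k))) (z (σ (pairSnd n k)))) (Measure.pi fun _ : Fin n => μ) := by
    intro σ
    refine Integrable.of_bound
      (Finset.measurable_fun_prod _ fun l _ => hgm _ _).aestronglyMeasurable 1
      (.of_forall fun z => ?_)
    rw [Real.norm_eq_abs, abs_of_nonneg (Finset.prod_nonneg fun _ _ => hg0 _ _)]
    exact Finset.prod_le_one (fun _ _ => hg0 _ _) fun _ _ => hg1 _ _
  have hpt : ∀ z : Fin n → ℝ, Real.exp (-(s * (((n / 2 : ℕ) : ℝ) * sampleVar n z))) ≤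
      ∑ σ : Equiv.Perm (Fin n), c * ∏ k, g (z (σ (pairFst n k))) (z (σ (pairSnd n k))) := by
    intro z
    have hJ := convexOn_exp.map_sum_le (t := Finset.univ) (w := fun _ : Equiv.Perm (Fin n) => c)
      (p := fun σ => ∑ k : Fin (n / 2),
        -(s * ((z (σ (pairFst n k)) - z (σ (pairSnd n k))) ^ 2 / 2)))
      (fun _ _ => hc0) (by simp [hc, hcard]) (fun _ _ => Set.mem_univ _)
    simp only [smul_eq_mul] at hJ
    refine le_trans (le_of_eq ?_) (hJ.trans (le_of_eq ?_))
    · rw [sampleVar_eq_average hn, Finset.mul_sum, ← Finset.sum_neg_distrib]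
      refine congrArg Real.exp (Finset.sum_congr rfl fun σ _ => ?_)
      rw [Finset.sum_neg_distrib, ← Finset.mul_sum]
      ring
    · simp only [Real.exp_sum, g]
  calc _ ≤ ∫ z : Fin n → ℝ, ∑ σ : Equiv.Perm (Fin n),
        c * ∏ k, g (z (σ (pairFst n k))) (z (σ (pairSnd n k)))
        ∂(Measure.pi fun _ : Fin n => μ) := by
        refine integral_mono_of_nonneg (.of_forall fun z => (Real.exp_pos _).le)
          (integrable_finsetSum _ fun σ _ => (hint σ).const_mul c) (.of_forall hpt)
    _ = ∑ σ : Equiv.Perm (Fin n), c * ∏ k : Fin (n / 2), ∫ z : Fin n → ℝ,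
        g (z (σ (pairFst n k))) (z (σ (pairSnd n k))) ∂(Measure.pi fun _ : Fin n => μ) := by
        rw [integral_finsetSum _ fun σ _ => (hint σ).const_mul c]
        refine Finset.sum_congr rfl fun σ _ => ?_
        rw [integral_const_mul, integral_prod_pairs g hg (a := fun k => σ (pairFst n k))
          (b := fun k => σ (pairSnd n k))]
        · intro k l h
          have := σ.injective h
          simp only [pairFst, Fin.mk.injEq] at this
          ext; omega
        · intro k l h
          have := σ.injective h
          simp only [pairSnd, Fin.mk.injEq] at this
          ext; omega
        · exact fun k l h => pairFst_ne_pairSnd k l (σ.injective h)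
    _ ≤ ∑ σ : Equiv.Perm (Fin n), c * ∏ k : Fin (n / 2), Real.exp B := by
        refine Finset.sum_le_sum fun σ _ => mul_le_mul_of_nonneg_left
          (Finset.prod_le_prod (fun k _ => integral_nonneg fun z => ?_) fun k _ => ?_) hc0
        · exact hg0 _ _
        · exact integral_exp_pair_le hrange
            (fun h => pairFst_ne_pairSnd k k (σ.injective h)) hs
    _ = _ := by
        simp only [Finset.prod_const, Finset.card_univ, Fintype.card_fin, Finset.sum_const,
          nsmul_eq_mul]
        rw [← mul_assoc, hc, mul_inv_cancel₀ hcard, one_mul, Real.exp_nat_mul]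

/-- Chernoff's bound for `⌊n/2⌋ Vₙ`; the loss from rounding is absorbed by `n - 1 ≤ 2⌊n/2⌋`. -/
lemma sampleVar_lower_tail (hn : 2 ≤ n) (hrange : ∀ᵐ x ∂μ, x ∈ Set.Icc (0 : ℝ) 1)
    {L : ℝ} (hL : 0 < L) :
    (Measure.pi fun _ : Fin n => μ).real {z | √(sampleVar n z) + √(2 * L / (n - 1))
      < √(Var[fun x : ℝ => x; μ])} ≤ Real.exp (-L) := by
  have hn' : (2 : ℝ) ≤ n := by exact_mod_cast hn
  have hn1 : (0 : ℝ) < n - 1 := by linarith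
  set P := Measure.pi fun _ : Fin n => μ
  set V := Var[fun x : ℝ => x; μ] with hV
  set M : ℝ := ((n / 2 : ℕ) : ℝ) with hM
  set w := √V with hw
  set c := √(2 * L / (n - 1)) with hc
  have hV0 : 0 ≤ V := variance_nonneg _ _
  have hwV : w ^ 2 = V := Real.sq_sqrt hV0
  have hc2 : c ^ 2 = 2 * L / (n - 1) := Real.sq_sqrt (by positivity)
  have hc0 : 0 ≤ c := Real.sqrt_nonneg _
  have hMn : (n : ℝ) - 1 ≤ 2 * M := by
    have : n ≤ 2 * (n / 2) + 1 := by omega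
    have : (n : ℝ) ≤ 2 * ((n / 2 : ℕ) : ℝ) + 1 := by exact_mod_cast this
    linarith
  rcases (Real.sqrt_nonneg V).eq_or_lt with h0 | hpos
  · have : {z : Fin n → ℝ | √(sampleVar n z) + c < w} = ∅ := by
      ext z
      simp only [Set.mem_ofPred_eq, Set.mem_empty_iff_false, iff_false, not_lt, hw, ← h0]
      positivity
    rw [this]
    simp [Real.exp_nonneg]
  -- With `t = c w`, this is the minimizer `2t/V` of `-s t + s² V / 4`.
  set s : ℝ := 2 * c / w with hs
  have hw0 : 0 < w := hpos
  have hs0 : 0 ≤ s := by positivity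
  have hM0 : 0 ≤ M := by positivity
  have hsub : {z : Fin n → ℝ | √(sampleVar n z) + c < w} ⊆
      {z | -(M * (w * (w - c))) ≤ -(M * sampleVar n z)} := by
    intro z hz
    simp only [Set.mem_ofPred_eq] at hz ⊢
    have h1 := Real.sq_sqrt (sampleVar_nonneg hn z)
    have h2 := Real.sqrt_nonneg (sampleVar n z)
    have : sampleVar n z ≤ w * (w - c) := by
      rw [← h1]; nlinarith
    have := mul_le_mul_of_nonneg_left this hM0
    linarith
  have hint : Integrable (fun z : Fin n → ℝ => Real.exp (s * (-(M * sampleVar n z)))) P := by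
    refine Integrable.of_bound ?_ 1 (.of_forall fun z => ?_)
    · have := measurable_sampleVar (n := n)
      exact Measurable.aestronglyMeasurable (by fun_prop)
    · rw [Real.norm_eq_abs, Real.abs_exp, Real.exp_le_one_iff]
      have := mul_nonneg hs0 (mul_nonneg hM0 (sampleVar_nonneg hn z))
      linarith
  have hch := measure_ge_le_exp_mul_mgf (μ := P) (X := fun z => -(M * sampleVar n z))
    (-(M * (w * (w - c)))) hs0 hint
  have hmgf : mgf (fun z => -(M * sampleVar n z)) P s ≤
      Real.exp (M * (-(s * V) + s ^ 2 * V / 4)) := by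
    have := integral_exp_sampleVar_le hn hrange hs0
    simpa only [mgf, mul_neg] using this
  refine (measureReal_mono hsub).trans (hch.trans ?_)
  refine (mul_le_mul_of_nonneg_left hmgf (Real.exp_nonneg _)).trans ?_
  rw [← Real.exp_add, Real.exp_le_exp]
  have hsw : s * w = 2 * c := by rw [hs]; field_simp
  have e : -s * -(M * (w * (w - c))) + M * (-(s * V) + s ^ 2 * V / 4)
      = M * (-(c * (s * w)) + (s * w) ^ 2 / 4) := by
    rw [← hwV]; ring
  rw [e, hsw]
  have : L ≤ M * c ^ 2 := by
    rw [hc2, mul_div_assoc', le_div_iff₀ hn1]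
    nlinarith
  nlinarith

/-- Bernstein's bound on the moment generating function of `𝔼Z - Z`. -/
lemma integral_exp_bernstein_le (hrange : ∀ᵐ x ∂μ, x ∈ Set.Icc (0 : ℝ) 1)
    {l : ℝ} (h0 : 0 ≤ l) (hl : l < 3) :
    Integrable (fun x => Real.exp (l * ((∫ y, y ∂μ) - x))) μ ∧
    ∫ x, Real.exp (l * ((∫ y, y ∂μ) - x)) ∂μ
      ≤ Real.exp (l ^ 2 * Var[fun x : ℝ => x; μ] * (3 / (6 - 2 * l))) := by
  set m := ∫ y, y ∂μ with hm
  have hL2 := memLp_of_unit hrange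
  have hid : Integrable (fun x : ℝ => x) μ := hL2.integrable (by norm_num)
  have hm1 : m ≤ 1 := by
    have := integral_mono_ae (μ := μ) hid (integrable_const (1 : ℝ))
      (by filter_upwards [hrange] with x hx using hx.2)
    simpa using this
  have hle : ∀ᵐ x ∂μ, l * (m - x) ≤ l := by
    filter_upwards [hrange] with x hx
    nlinarith [hx.1]
  have hint : Integrable (fun x => Real.exp (l * (m - x))) μ := by
    refine Integrable.of_bound (by fun_prop) (Real.exp l) ?_
    filter_upwards [hle] with x hx
    rw [Real.norm_eq_abs, Real.abs_exp]
    exact Real.exp_le_exp.2 hx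
  refine ⟨hint, ?_⟩
  have hsq : Integrable (fun x : ℝ => (x - m) ^ 2) μ :=
    (hL2.sub (memLp_const m)).integrable_sq
  have hvar : Var[fun x : ℝ => x; μ] = ∫ x, (x - m) ^ 2 ∂μ :=
    variance_eq_integral aemeasurable_id
  set K := 3 / (6 - 2 * l)
  have hlin : Integrable (fun x : ℝ => l * (m - x)) μ :=
    ((integrable_const m).sub hid).const_mul l
  calc ∫ x, Real.exp (l * (m - x)) ∂μ
      ≤ ∫ x, (1 + l * (m - x) + l ^ 2 * K * (x - m) ^ 2) ∂μ := by
        refine integral_mono_ae hint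
          (((integrable_const _).add hlin).add (hsq.const_mul _)) ?_
        filter_upwards [hle] with x hx
        refine (exp_le_bernstein hx h0 hl).trans (le_of_eq ?_)
        ring
    _ = 1 + l ^ 2 * K * Var[fun x : ℝ => x; μ] := by
        have h1 : Integrable (fun x : ℝ => 1 + l * (m - x)) μ := (integrable_const _).add hlin
        rw [integral_add h1 (hsq.const_mul _), integral_add (integrable_const _) hlin, integral_const_mul, integral_const_mul,
          integral_sub (integrable_const _) hid, ← hvar, ← hm]
        simp
    _ ≤ _ := by
        refine le_trans ?_ (Real.add_one_le_exp _)
        linarith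

/-- Bernstein's inequality for the lower tail of the sample mean, in deviation form. -/
lemma sampleMean_lower_tail (hn : 2 ≤ n) (hrange : ∀ᵐ x ∂μ, x ∈ Set.Icc (0 : ℝ) 1)
    {L : ℝ} (hL : 0 < L) :
    (Measure.pi fun _ : Fin n => μ).real {z | √(2 * Var[fun x : ℝ => x; μ] * L / n) + L / (3 * n)
      < (∫ x, x ∂μ) - sampleMean n z} ≤ Real.exp (-L) := by
  have hn' : (2 : ℝ) ≤ n := by exact_mod_cast hn
  have hn0 : (0 : ℝ) < n := by linarith
  set P := Measure.pi fun _ : Fin n => μ with hP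
  set V := Var[fun x : ℝ => x; μ] with hV
  set m := ∫ x, x ∂μ with hm
  have hV0 : 0 ≤ V := variance_nonneg _ _
  -- If `V = 0` the sample mean is a.s. equal to `m`; the choice of `l` below requires `V > 0`.
  rcases hV0.eq_or_lt with h0 | hVpos
  · have hae := ae_eq_integral_of_variance_eq_zero (memLp_of_unit hrange) h0.symm
    have hall : ∀ᵐ z ∂P, ∀ i, z i = m := ae_all_iff.2 fun i => ae_eval_of_ae hae i
    have : P.real {z | √(2 * V * L / n) + L / (3 * n) < m - sampleMean n z} = 0 := by
      rw [measureReal_eq_zero_iff]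
      refine measure_mono_null ?_ hall
      intro z hz hc
      simp only [Set.mem_ofPred_eq] at hz hc
      have : sampleMean n z = m := by
        simp only [sampleMean, hc, Finset.sum_const, Finset.card_univ, Fintype.card_fin,
          nsmul_eq_mul]
        field_simp
      rw [this, sub_self] at hz
      have : 0 ≤ √(2 * V * L / n) + L / (3 * n) := by positivity
      linarith
    rw [this]
    exact Real.exp_nonneg _
  set a := √(2 * L) with ha
  set b := √(n * V) with hb
  have ha0 : 0 < a := Real.sqrt_pos.2 (by positivity)
  have hb0 : 0 < b := Real.sqrt_pos.2 (by positivity)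
  have ha2 : a ^ 2 = 2 * L := Real.sq_sqrt (by positivity)
  have hb2 : b ^ 2 = n * V := Real.sq_sqrt (by positivity)
  have hab : n * √(2 * V * L / n) = a * b := by
    rw [ha, hb, ← Real.sqrt_mul (by positivity)]
    rw [show 2 * L * (n * V) = n ^ 2 * (2 * V * L / n) by field_simp,
      Real.sqrt_mul (by positivity), Real.sqrt_sq hn0.le]
  -- This `l` makes the Chernoff exponent `l (a b + a²/6) - l² b² / (2 (1 - l/3))` equal to
  -- `a²/2 = L`.
  set l := a / (b + a / 3) with hl
  have hd : 0 < b + a / 3 := by positivity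
  have hl0 : 0 ≤ l := by positivity
  have hl3 : l < 3 := by rw [hl, div_lt_iff₀ hd]; linarith
  obtain ⟨hint1, hmgf1⟩ := integral_exp_bernstein_le hrange hl0 hl3
  set X : Fin n → (Fin n → ℝ) → ℝ := fun i z => m - z i with hX
  have hXind : iIndepFun X P :=
    iIndepFun_pi (X := fun _ x => m - x) (fun _ => by fun_prop)
  have hXm : ∀ i, Measurable (X i) := fun i => by fun_prop
  have hmp := fun i => measurePreserving_eval (fun _ : Fin n => μ) i
  have hXint : ∀ i, Integrable (fun z => Real.exp (l * X i z)) P := fun i =>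
    (hmp i).integrable_comp_of_integrable hint1
  have hXmgf : ∀ i, mgf (X i) P l ≤ Real.exp (l ^ 2 * V * (3 / (6 - 2 * l))) := by
    intro i
    refine le_trans (le_of_eq ?_) hmgf1
    have := integral_map (μ := P) (f := fun x => Real.exp (l * (m - x)))
      (measurable_pi_apply i).aemeasurable (Measurable.aestronglyMeasurable (by fun_prop))
    rw [show Measure.map (fun z : Fin n → ℝ => z i) P = μ from (hmp i).map_eq] at this
    exact this.symm
  have hsum : Integrable (fun z => Real.exp (l * (∑ i, X i) z)) P :=
    hXind.integrable_exp_mul_sum hXm fun i _ => hXint i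
  have hch := measure_ge_le_exp_mul_mgf (a * b + a ^ 2 / 6) hl0 hsum
  have hsub : {z | √(2 * V * L / n) + L / (3 * n) < m - sampleMean n z} ⊆
      {z | a * b + a ^ 2 / 6 ≤ (∑ i, X i) z} := by
    intro z hz
    simp only [Set.mem_ofPred_eq] at hz ⊢
    have h1 := mul_le_mul_of_nonneg_left hz.le hn0.le
    have e1 : n * (√(2 * V * L / n) + L / (3 * n)) = a * b + a ^ 2 / 6 := by
      rw [mul_add, hab, ha2]; field_simp; ring
    have e2 : n * (m - sampleMean n z) = (∑ i, X i) z := by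
      simp only [hX, sampleMean, Finset.sum_apply, Finset.sum_sub_distrib, Finset.sum_const,
        Finset.card_univ, Fintype.card_fin, nsmul_eq_mul]
      field_simp
    rw [← e1, ← e2]; exact h1
  refine (measureReal_mono hsub).trans (hch.trans ?_)
  rw [hXind.mgf_sum hXm]
  have hprod : ∏ i, mgf (X i) P l ≤ Real.exp (n * (l ^ 2 * V * (3 / (6 - 2 * l)))) := by
    refine (Finset.prod_le_prod (fun i _ => mgf_nonneg) fun i _ => hXmgf i).trans (le_of_eq ?_)
    rw [Finset.prod_const, Finset.card_univ, Fintype.card_fin, Real.exp_nat_mul]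
  refine (mul_le_mul_of_nonneg_left hprod (Real.exp_nonneg _)).trans ?_
  rw [← Real.exp_add, Real.exp_le_exp]
  have e1 : n * (l ^ 2 * V * (3 / (6 - 2 * l))) = l ^ 2 * b ^ 2 * (3 / (6 - 2 * l)) := by
    rw [hb2]; ring
  have e2 : 6 - 2 * l = 6 * b / (b + a / 3) := by
    rw [hl]; field_simp; ring
  have e3 : L = a ^ 2 / 2 := by linarith
  rw [e1, e2, e3, hl]
  refine le_of_eq ?_
  field_simp
  ring

end Tails

/-- **Empirical Bernstein bound** (Theorem 4): for `Z, Z₁, …, Zₙ` i.i.d. with values in `[0,1]`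
and `δ > 0`, with probability at least `1 - δ` in `(Z₁, …, Zₙ)`,
`𝔼Z - (1/n)∑ Zᵢ ≤ √(2 Vₙ(𝐙) ln(2/δ) / n) + 7 ln(2/δ) / (3(n-1))`. -/
theorem empirical_bernstein_bound (n : ℕ) (hn : 2 ≤ n)
    (μ : Measure ℝ) [IsProbabilityMeasure μ]
    (hrange : ∀ᵐ x ∂μ, x ∈ Set.Icc (0 : ℝ) 1) (δ : ℝ) (hδ : 0 < δ) :
    1 - δ ≤ ((Measure.pi fun _ : Fin n => μ)
      {z | (∫ x, x ∂μ) - sampleMean n z ≤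
        Real.sqrt (2 * sampleVar n z * Real.log (2 / δ) / n) +
          7 * Real.log (2 / δ) / (3 * ((n : ℝ) - 1))}).toReal := by
  rcases le_or_gt 1 δ with h1 | h1
  · exact le_trans (by linarith) ENNReal.toReal_nonneg
  have hn' : (2 : ℝ) ≤ n := by exact_mod_cast hn
  have hn0 : (0 : ℝ) < n := by linarith
  have hn1 : (0 : ℝ) < n - 1 := by linarith
  set L := Real.log (2 / δ) with hLdef
  have hL : 0 < L := Real.log_pos (by rw [lt_div_iff₀ hδ]; linarith)
  have hexp : Real.exp (-L) = δ / 2 := by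
    rw [Real.exp_neg, hLdef, Real.exp_log (by positivity), inv_div]
  set P := Measure.pi fun _ : Fin n => μ with hP
  have hA := sampleMean_lower_tail hn hrange hL
  have hB := sampleVar_lower_tail hn hrange hL
  set V := Var[fun x : ℝ => x; μ]
  rw [hexp, ← hP] at hA hB
  set A := {z : Fin n → ℝ | √(2 * V * L / n) + L / (3 * n) < (∫ x, x ∂μ) - sampleMean n z}
  set B := {z : Fin n → ℝ | √(sampleVar n z) + √(2 * L / (n - 1)) < √V}
  set G := {z : Fin n → ℝ | (∫ x, x ∂μ) - sampleMean n z ≤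
        √(2 * sampleVar n z * L / n) + 7 * L / (3 * ((n : ℝ) - 1))}
  have hcover : (Set.univ : Set (Fin n → ℝ)) ⊆ G ∪ (A ∪ B) := by
    intro z _
    by_contra hz
    simp only [A, B, G, Set.mem_union, Set.mem_ofPred_eq, not_or, not_lt, not_le] at hz
    obtain ⟨hG, hA', hB'⟩ := hz
    refine absurd hG (not_lt.2 (hA'.trans ?_))
    have hv := sampleVar_nonneg hn z
    have e1 : √(2 * V * L / n) = √(2 * L / n) * √V := by
      rw [← Real.sqrt_mul (by positivity)]; congr 1; ring
    have e2 : √(2 * sampleVar n z * L / n) = √(2 * L / n) * √(sampleVar n z) := by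
      rw [← Real.sqrt_mul (by positivity)]; congr 1; ring
    have h2 := mul_le_mul_of_nonneg_left hB' (Real.sqrt_nonneg (2 * L / n))
    have h3 : √(2 * L / n) * √(2 * L / (n - 1)) ≤ 2 * L / (n - 1) := by
      have : √(2 * L / n) ≤ √(2 * L / (n - 1)) := by
        apply Real.sqrt_le_sqrt
        gcongr
        linarith
      refine (mul_le_mul_of_nonneg_right this (Real.sqrt_nonneg _)).trans (le_of_eq ?_)
      exact Real.mul_self_sqrt (by positivity)
    have h4 : L / (3 * n) ≤ L / (3 * (n - 1)) := by
      gcongr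
      linarith
    have h5 : 2 * L / (n - 1) + L / (3 * (n - 1)) = 7 * L / (3 * ((n : ℝ) - 1)) := by
      field_simp; norm_num
    rw [e1, e2]
    linarith
  have hU : P.real Set.univ ≤ P.real G + (P.real A + P.real B) :=
    (measureReal_mono hcover).trans
      ((measureReal_union_le _ _).trans (by gcongr; exact measureReal_union_le _ _))
  rw [probReal_univ] at hU
  change 1 - δ ≤ P.real G
  linarith
end

section
/- Let X = (X_1, ..., X_n) be a vector of independent random variables with values in a set 𝒳. Suppose a ≥ 1 and Z = Z(X) is a measurable real-valued function with finite expectation satisfying almost surely: (i) Z(X) − inf_{y ∈ 𝒳} Z(X_{y,k}) ≤ 1 for every k, and (ii) ∑_{k=1}^n (Z(X) − inf_{y ∈ 𝒳} Z(X_{y,k}))^2 ≤ a·Z(X). Then for every t > 0, Pr{E[Z] − Z > t} ≤ exp(−t² / (2a·E[Z])). -/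
/-!
The proof is the entropy method. Since `∑ₖ (⋯)² ≤ a Z`, the function `Z` is almost surely
nonnegative. Write `G b = 𝔼 exp (-b Z)`.

*Entropy bound* (`log_laplace_self_bound`). Let `f = exp (-b Z)` and let `fⱼ` be `f` with the
coordinates of index `≥ j` integrated out, so that `f₀ = G b` and `fₙ = f`. For a function
`uₖ = exp (-b mₖ)` not depending on the coordinate `k`, the inequality `log s ≤ s - 1` gives
pointwise
`f log (fₖ₊₁ / fₖ) ≤ f (exp (b (Z - mₖ)) - b (Z - mₖ) - 1) + uₖ (fₖ₊₁ / fₖ - 1)`.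
The last term has mean zero, because `uₖ` and `fₖ` are constant in the coordinate `k` and
integrating `fₖ₊₁` over that coordinate gives `fₖ`. Summing over `k`, with `0 ≤ Z - mₖ ≤ 1`,
`∑ (Z - mₖ)² ≤ a Z` and a Taylor bound for `exp` on `[0, 1]`, yields, for `0 ≤ b ≤ 1`,
`- G b * log (G b) ≤ (b + a (b²/2 + 2b³/9)) * 𝔼 [Z exp (-b Z)]`.

*Measurability* (`exists_coordinate_essInf`). The infimum over the `k`-th coordinate need not be
measurable, so `mₖ` is taken to be the essential infimum over that coordinate, which is
measurable and lies between the infimum and `Z` almost surely.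

*Integration* (`log_laplace_le`). As `-𝔼 [Z exp (-b Z)]` is the derivative of `G`, the entropy bound is a
differential inequality making `-log (G b) / (b - a b²/2)` nondecreasing on `(0, 1/a]`. Its limit
inferior at `0` is at least `𝔼 Z`, hence `log (G b) ≤ -(b - a b²/2) 𝔼 Z`, and Chernoff's bound
with `b = t / (a 𝔼 Z)` finishes the proof.
-/

open MeasureTheory
open Function Set Filter Topology
open scoped ENNReal

section
variable {𝒳 : Type*} [MeasurableSpace 𝒳] {n : ℕ} (μ : Fin n → Measure 𝒳)

/-- The function `f` with all coordinates of index at least `j` integrated out. It is encoded as a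
function of the whole vector that is constant in those coordinates. -/
noncomputable def tailMarginal (f : (Fin n → 𝒳) → ℝ≥0∞) (j : ℕ) : (Fin n → 𝒳) → ℝ≥0∞ :=
  lmarginal μ (Finset.univ.filter fun i : Fin n => j ≤ i) f

theorem tailMarginal_last (f : (Fin n → 𝒳) → ℝ≥0∞) (X : Fin n → 𝒳) :
    tailMarginal μ f n X = f X := by
  have : (Finset.univ.filter fun i : Fin n => n ≤ i) = ∅ := by
    ext i; simp
  simp [tailMarginal, this]

variable [∀ k, IsProbabilityMeasure (μ k)]

/-- A measurable version `m` of the essential infimum of `W` over the `k`-th coordinate. It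
dominates every constant that bounds `W` from below along a coordinate line, in particular the pointwise
infimum, which need not be measurable itself. -/
theorem exists_coordinate_essInf (W : (Fin n → 𝒳) → ℝ≥0∞) (hW : Measurable W) (k : Fin n) :
    ∃ m : (Fin n → 𝒳) → ℝ≥0∞, Measurable m ∧ (∀ X y, m (update X k y) = m X) ∧
      (∀ᵐ X ∂Measure.pi μ, m X ≤ W X) ∧
      ∀ X c, (∀ y, c ≤ W (update X k y)) → c ≤ m X := by
  classical
  -- `m X` is the supremum of the rational values `v q` with `W (update X k y) ≥ v q` for a.e. `y`.
  let v : ℚ → ℝ≥0∞ := fun q => (Real.toNNReal (q : ℝ) : ℝ≥0∞)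
  let N : ℚ → Set (Fin n → 𝒳) := fun q => {X | μ k {y | W (update X k y) < v q} = 0}
  have hN : ∀ q, MeasurableSet (N q) := by
    intro q
    have hs : MeasurableSet {p : (Fin n → 𝒳) × 𝒳 | W (update p.1 k p.2) < v q} :=
      measurableSet_lt (hW.comp measurable_update') measurable_const
    exact (measurable_measure_prodMk_left (ν := μ k) hs) (measurableSet_singleton 0)
  have hNu : ∀ q X y, update X k y ∈ N q ↔ X ∈ N q := by
    intro q X y; simp [N]
  refine ⟨fun X => ⨆ q : ℚ, (N q).indicator (fun _ => v q) X, ?_, ?_, ?_, ?_⟩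
  · exact Measurable.iSup fun q => measurable_const.indicator (hN q)
  · intro X y
    simp only [indicator, hNu]
  · simp only [iSup_le_iff]
    rw [ae_all_iff]
    intro q
    let B : Set (Fin n → 𝒳) := N q ∩ {X | W X < v q}
    have hB : MeasurableSet B := (hN q).inter (measurableSet_lt hW measurable_const)
    have h0 : ∫⁻ X, B.indicator 1 X ∂Measure.pi μ = ∫⁻ X, 0 ∂Measure.pi μ := by
      refine lintegral_eq_of_lmarginal_eq {k} (measurable_one.indicator hB) measurable_const ?_
      rw [lmarginal_singleton, lmarginal_singleton]
      ext X
      simp only [lintegral_zero]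
      by_cases hX : X ∈ N q
      · have : ∀ᵐ y ∂μ k, ¬ W (update X k y) < v q := by
          rw [ae_iff]; simpa [N] using hX
        rw [lintegral_eq_zero_iff']
        · filter_upwards [this] with y hy
          simp [B, hy]
        · exact ((measurable_one.indicator hB).comp (measurable_update X)).aemeasurable
      · simp [B, indicator, hNu, hX]
    rw [lintegral_indicator_one hB, lintegral_zero] at h0
    have : ∀ᵐ X ∂Measure.pi μ, X ∉ B := by
      rw [ae_iff]; simpa using h0
    filter_upwards [this] with X hX
    by_cases hq : X ∈ N q
    · simp only [hq, indicator_of_mem]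
      by_contra h
      exact hX ⟨hq, not_le.1 h⟩
    · simp [hq]
  · intro X c hc
    refine le_of_forall_lt fun d hd => ?_
    obtain ⟨q, -, h1, h2⟩ := ENNReal.lt_iff_exists_rat_btwn.1 hd
    have hq : X ∈ N q := by
      have : {y | W (update X k y) < v q} = ∅ := by
        ext y; simpa using h2.le.trans (hc y)
      simp only [N, mem_ofPred_eq, this, measure_empty]
    refine h1.trans_le ?_
    refine le_iSup_of_le q ?_
    simp [hq, v]

/-- A quadratic bound in `x` for the function `φ (b x) = exp (b x) - b x - 1`; the coefficient
`b² / 2 + 2 b³ / 9` comes from the third-order Taylor remainder of `exp` on `[0, 1]`. -/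
theorem pointwise_exp_bound {b x : ℝ} (hb0 : 0 ≤ b) (hb1 : b ≤ 1) (hx0 : 0 ≤ x) (hx1 : x ≤ 1) :
    Real.exp (b * x) - b * x - 1 ≤ (b ^ 2 / 2 + 2 * b ^ 3 / 9) * x ^ 2 := by
  have h := Real.exp_bound' (mul_nonneg hb0 hx0) (mul_le_one₀ hb1 hx0 hx1) (n := 3) (by norm_num)
  simp [Finset.sum_range_succ, Nat.factorial] at h
  have h3 : b ^ 3 * x ^ 3 ≤ b ^ 3 * x ^ 2 := by
    have : x ^ 3 ≤ x ^ 2 := by nlinarith [sq_nonneg x]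
    gcongr
  nlinarith

theorem tailMarginal_pos {f : (Fin n → 𝒳) → ℝ≥0∞} (hf : Measurable f) (h0 : ∀ X, 0 < f X)
    (j : ℕ) (X : Fin n → 𝒳) : 0 < tailMarginal μ f j X := by
  unfold tailMarginal lmarginal
  refine (lintegral_pos_iff_support (hf.comp measurable_updateFinset)).2 ?_
  have : support (f ∘ updateFinset X (Finset.univ.filter fun i : Fin n => j ≤ i)) = univ := by
    ext y; simp [(h0 _).ne']
  rw [this]
  simp

theorem tailMarginal_le_one {f : (Fin n → 𝒳) → ℝ≥0∞} (h1 : ∀ X, f X ≤ 1)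
    (j : ℕ) (X : Fin n → 𝒳) : tailMarginal μ f j X ≤ 1 := by
  unfold tailMarginal lmarginal
  calc _ ≤ ∫⁻ y, 1 ∂(Measure.pi fun i : ↥(Finset.univ.filter fun i : Fin n => j ≤ i) => μ i) :=
        lintegral_mono fun y => h1 _
    _ = 1 := by simp

theorem tailMarginal_zero (f : (Fin n → 𝒳) → ℝ≥0∞) (X : Fin n → 𝒳) :
    tailMarginal μ f 0 X = ∫⁻ x, f x ∂Measure.pi μ := by
  simp [tailMarginal]

theorem tailMarginal_step {f : (Fin n → 𝒳) → ℝ≥0∞} (hf : Measurable f) (k : Fin n)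
    (X : Fin n → 𝒳) :
    tailMarginal μ f k X = ∫⁻ y, tailMarginal μ f (k + 1) (update X k y) ∂μ k := by
  have : (Finset.univ.filter fun i : Fin n => (k : ℕ) ≤ i)
      = insert k (Finset.univ.filter fun i : Fin n => (k : ℕ) + 1 ≤ i) := by
    ext i; simp [Fin.ext_iff]; omega
  unfold tailMarginal
  rw [this, lmarginal_insert _ hf (by simp)]

/-- The martingale property of the tail marginals: the ratio of consecutive ones has conditional mean
`1` given the coordinates other than the `k`-th. -/
theorem lintegral_mul_tailMarginal_ratio {f : (Fin n → 𝒳) → ℝ≥0∞} (hf : Measurable f)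
    (h0 : ∀ X, 0 < f X) (h1 : ∀ X, f X ≤ 1) (k : Fin n)
    {u : (Fin n → 𝒳) → ℝ≥0∞} (hu : Measurable u) (huk : ∀ X y, u (update X k y) = u X) :
    ∫⁻ X, u X * (tailMarginal μ f (k + 1) X / tailMarginal μ f k X) ∂Measure.pi μ
      = ∫⁻ X, u X ∂Measure.pi μ := by
  have hm : ∀ j, Measurable (tailMarginal μ f j) := fun j => hf.lmarginal μ
  refine lintegral_eq_of_lmarginal_eq {k} (hu.mul ((hm _).div (hm _))) hu ?_
  rw [lmarginal_singleton, lmarginal_singleton]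
  ext X
  have hk : ∀ y, tailMarginal μ f k (update X k y) = tailMarginal μ f k X := fun y =>
    lmarginal_update_of_mem μ (by simp) f X y
  simp only [huk, hk, div_eq_mul_inv]
  have hc : Measurable fun y => tailMarginal μ f (k + 1) (update X k y) :=
    (hm _).comp (measurable_update X)
  rw [lintegral_const_mul _ (hc.mul_const _), lintegral_mul_const _ hc, ← tailMarginal_step μ hf,
    ENNReal.mul_inv_cancel (tailMarginal_pos μ hf h0 _ _).ne'
      ((tailMarginal_le_one μ h1 _ _).trans_lt ENNReal.one_lt_top).ne]
  simp

/-- The entropy bound for `exp (-b Z)`, with `m k` a lower bound for `Z` not depending on the `k`-th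
coordinate. The left-hand side is `-G log G` for the Laplace transform `G` of `Z` at `b`. -/
theorem log_laplace_self_bound {Z : (Fin n → 𝒳) → ℝ} (hZ : Measurable Z) (hZ0 : ∀ X, 0 ≤ Z X)
    (hint : Integrable Z (Measure.pi μ)) {m : Fin n → (Fin n → 𝒳) → ℝ}
    (hm : ∀ k, Measurable (m k)) (hm0 : ∀ k X, 0 ≤ m k X)
    (hmk : ∀ k X y, m k (update X k y) = m k X) {a : ℝ}
    (hle : ∀ᵐ X ∂Measure.pi μ, ∀ k, m k X ≤ Z X)
    (h1 : ∀ᵐ X ∂Measure.pi μ, ∀ k, Z X - m k X ≤ 1)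
    (h2 : ∀ᵐ X ∂Measure.pi μ, ∑ k, (Z X - m k X) ^ 2 ≤ a * Z X)
    {b : ℝ} (hb0 : 0 ≤ b) (hb1 : b ≤ 1) :
    -Real.log (∫ X, Real.exp (-(b * Z X)) ∂Measure.pi μ)
        * ∫ X, Real.exp (-(b * Z X)) ∂Measure.pi μ ≤
      (b + a * (b ^ 2 / 2 + 2 * b ^ 3 / 9)) *
        ∫ X, Z X * Real.exp (-(b * Z X)) ∂Measure.pi μ := by
  set P := Measure.pi μ with hP
  let f : (Fin n → 𝒳) → ℝ := fun X => Real.exp (-(b * Z X))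
  let F : (Fin n → 𝒳) → ℝ≥0∞ := fun X => ENNReal.ofReal (f X)
  let u : Fin n → (Fin n → 𝒳) → ℝ := fun k X => Real.exp (-(b * m k X))
  let T : ℕ → (Fin n → 𝒳) → ℝ := fun j X => (tailMarginal μ F j X).toReal
  have hfm : Measurable f := by fun_prop
  have hFm : Measurable F := hfm.ennreal_ofReal
  have hf1 : ∀ X, f X ≤ 1 := fun X => Real.exp_le_one_iff.2 (by have := hZ0 X; nlinarith)
  have hF0 : ∀ X, 0 < F X := fun X => ENNReal.ofReal_pos.2 (Real.exp_pos _)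
  have hF1 : ∀ X, F X ≤ 1 := fun X => ENNReal.ofReal_le_one.2 (hf1 X)
  have hum : ∀ k, Measurable (u k) := fun k => by have := hm k; fun_prop
  have hu1 : ∀ k X, u k X ≤ 1 := fun k X =>
    Real.exp_le_one_iff.2 (by have := hm0 k X; nlinarith)
  have hTm : ∀ j, Measurable (T j) := fun j => (hFm.lmarginal μ).ennreal_toReal
  have hT0 : ∀ j X, 0 < T j X := fun j X =>
    ENNReal.toReal_pos (tailMarginal_pos μ hFm hF0 j X).ne'
      ((tailMarginal_le_one μ hF1 j X).trans_lt ENNReal.one_lt_top).ne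
  have hfi : Integrable f P :=
    Integrable.of_bound hfm.aestronglyMeasurable 1 (ae_of_all _ fun X => by
      rw [Real.norm_eq_abs, abs_of_pos (Real.exp_pos _)]; exact hf1 X)
  have hui : ∀ k, Integrable (u k) P := fun k =>
    Integrable.of_bound (hum k).aestronglyMeasurable 1 (ae_of_all _ fun X => by
      rw [Real.norm_eq_abs, abs_of_pos (Real.exp_pos _)]; exact hu1 k X)
  have hZf : Integrable (fun X => Z X * f X) P := by
    refine hint.mono (hZ.mul hfm).aestronglyMeasurable (ae_of_all _ fun X => ?_)
    rw [norm_mul, Real.norm_eq_abs (f X), abs_of_pos (Real.exp_pos _)]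
    exact mul_le_of_le_one_right (norm_nonneg _) (hf1 X)
  have hTlast : ∀ X, T n X = f X := fun X => by
    simp only [T, tailMarginal_last, F, ENNReal.toReal_ofReal (Real.exp_pos _).le, f]
  have hTzero : ∀ X, T 0 X = ∫ X, f X ∂P := fun X => by
    simp only [T, tailMarginal_zero, F]
    rw [integral_eq_lintegral_of_nonneg_ae (ae_of_all _ fun X => (Real.exp_pos _).le)
      hfm.aestronglyMeasurable]
  -- `T k X` and `u k X` do not depend on the `k`-th coordinate of `X`.
  have hlin : ∀ k : Fin n, ∫⁻ X, ENNReal.ofReal (u k X * (T (k + 1) X / T k X)) ∂P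
      = ∫⁻ X, ENNReal.ofReal (u k X) ∂P := by
    intro k
    rw [← lintegral_mul_tailMarginal_ratio μ hFm hF0 hF1 k (hum k).ennreal_ofReal
      (fun X y => by simp only [u, hmk])]
    refine lintegral_congr fun X => ?_
    have hfin : ∀ j, tailMarginal μ F j X ≠ ∞ := fun j =>
      ((tailMarginal_le_one μ hF1 j X).trans_lt ENNReal.one_lt_top).ne
    rw [ENNReal.ofReal_mul (Real.exp_pos _).le, ENNReal.ofReal_div_of_pos (hT0 _ _),
      ENNReal.ofReal_toReal (hfin _), ENNReal.ofReal_toReal (hfin _)]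
  have hurm : ∀ k : Fin n, Measurable fun X => u k X * (T (k + 1) X / T k X) := fun k =>
    (hum k).mul ((hTm _).div (hTm _))
  have hur0 : ∀ (k : Fin n) X, 0 ≤ u k X * (T (k + 1) X / T k X) := fun k X =>
    mul_nonneg (Real.exp_pos _).le (div_pos (hT0 _ _) (hT0 _ _)).le
  have huri : ∀ k : Fin n, Integrable (fun X => u k X * (T (k + 1) X / T k X)) P := by
    intro k
    refine ⟨(hurm k).aestronglyMeasurable, ?_⟩
    rw [hasFiniteIntegral_iff_ofReal (ae_of_all _ (hur0 k)), hlin k,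
      ← hasFiniteIntegral_iff_ofReal (ae_of_all _ fun X => (Real.exp_pos _).le)]
    exact (hui k).2
  have hureq : ∀ k : Fin n, ∫ X, u k X * (T (k + 1) X / T k X) ∂P = ∫ X, u k X ∂P := by
    intro k
    rw [integral_eq_lintegral_of_nonneg_ae (ae_of_all _ (hur0 k)) (hurm k).aestronglyMeasurable,
      hlin k, ← integral_eq_lintegral_of_nonneg_ae (ae_of_all _ fun X => (Real.exp_pos _).le)
        (hum k).aestronglyMeasurable]
  set G := ∫ X, f X ∂P with hG
  have hpt : ∀ᵐ X ∂P, -b * (Z X * f X) - Real.log G * f X ≤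
      a * (b ^ 2 / 2 + 2 * b ^ 3 / 9) * (Z X * f X)
        + ∑ k : Fin n, (u k X * (T (k + 1) X / T k X) - u k X) := by
    filter_upwards [hle, h1, h2] with X hle h1 h2
    have hfp : 0 < f X := Real.exp_pos _
    have htel : ∑ k : Fin n, (Real.log (T (k + 1) X) - Real.log (T k X))
        = -(b * Z X) - Real.log G := by
      rw [Fin.sum_univ_eq_sum_range (fun j => Real.log (T (j + 1) X) - Real.log (T j X)) n,
        Finset.sum_range_sub (fun j => Real.log (T j X)), hTlast, hTzero]
      simp only [f, Real.log_exp]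
    have hk : ∀ k : Fin n, f X * (Real.log (T (k + 1) X) - Real.log (T k X)) ≤
        (b ^ 2 / 2 + 2 * b ^ 3 / 9) * f X * (Z X - m k X) ^ 2
          + (u k X * (T (k + 1) X / T k X) - u k X) := by
      intro k
      have hr : 0 < T (k + 1) X / T k X := div_pos (hT0 _ _) (hT0 _ _)
      rw [← Real.log_div (hT0 _ _).ne' (hT0 _ _).ne']
      set r := T (k + 1) X / T k X
      have he := pointwise_exp_bound hb0 hb1 (sub_nonneg.2 (hle k)) (h1 k)
      have hue : f X * Real.exp (b * (Z X - m k X)) = u k X := by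
        simp only [f, u, ← Real.exp_add]; congr 1; ring
      -- `log s ≤ s - 1` at `s = r * u k X / f X`.
      have hlog := Real.log_le_sub_one_of_pos (mul_pos hr (Real.exp_pos (b * (Z X - m k X))))
      rw [Real.log_mul hr.ne' (Real.exp_pos _).ne', Real.log_exp] at hlog
      have e1 := mul_le_mul_of_nonneg_left hlog hfp.le
      have e2 := mul_le_mul_of_nonneg_left he hfp.le
      have e3 : f X * (r * Real.exp (b * (Z X - m k X)) - 1) = u k X * r - f X := by
        rw [← hue]; ring
      have e4 : f X * (Real.exp (b * (Z X - m k X)) - b * (Z X - m k X) - 1)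
          = u k X - f X * (b * (Z X - m k X)) - f X := by
        rw [← hue]; ring
      linarith
    have hsum := Finset.sum_le_sum fun k (_ : k ∈ Finset.univ) => hk k
    rw [← Finset.mul_sum, htel, Finset.sum_add_distrib, ← Finset.mul_sum] at hsum
    have hψ : 0 ≤ (b ^ 2 / 2 + 2 * b ^ 3 / 9) * f X := by positivity
    have := mul_le_mul_of_nonneg_left h2 hψ
    linarith
  have hdi : ∀ k : Fin n, Integrable (fun X => u k X * (T (k + 1) X / T k X) - u k X) P :=
    fun k => (huri k).sub (hui k)
  have hI := integral_mono_ae ((hZf.const_mul (-b)).sub (hfi.const_mul (Real.log G)))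
    ((hZf.const_mul (a * (b ^ 2 / 2 + 2 * b ^ 3 / 9))).add
      (integrable_finsetSum Finset.univ fun k _ => hdi k)) hpt
  simp only [Pi.add_apply, Pi.sub_apply] at hI
  rw [integral_sub (hZf.const_mul (-b)) (hfi.const_mul _),
    integral_add (hZf.const_mul _)
      (integrable_finsetSum Finset.univ fun k _ => hdi k),
    integral_finsetSum _ (fun k _ => hdi k), integral_const_mul,
    integral_const_mul, integral_const_mul] at hI
  simp only [fun k => integral_sub (huri k) (hui k), hureq, sub_self, Finset.sum_const_zero] at hI
  change -Real.log G * G ≤ _ * ∫ X, Z X * f X ∂P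
  linarith

end

/-- Integration of the differential inequality `hself` for the Laplace transform of `Z`. Since `Z` is
only assumed integrable, the transform is differentiated at positive arguments only, and the
initial condition at `0` is recovered from the limit of `𝔼 (1 - exp (-c Z)) / c`. -/
theorem log_laplace_le {Ω : Type*} [MeasurableSpace Ω] (P : Measure Ω) [IsProbabilityMeasure P]
    {Z : Ω → ℝ} (hZ : Measurable Z) (hZ0 : ∀ x, 0 ≤ Z x) (hint : Integrable Z P)
    {a : ℝ} (ha : 1 ≤ a)
    (hself : ∀ b, 0 ≤ b → b ≤ 1 →
      -Real.log (∫ x, Real.exp (-(b * Z x)) ∂P) * ∫ x, Real.exp (-(b * Z x)) ∂P ≤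
      (b + a * (b ^ 2 / 2 + 2 * b ^ 3 / 9)) * ∫ x, Z x * Real.exp (-(b * Z x)) ∂P)
    {b : ℝ} (hb0 : 0 < b) (hb1 : b ≤ 1 / a) :
    Real.log (∫ x, Real.exp (-(b * Z x)) ∂P) ≤ -((b - a * b ^ 2 / 2) * ∫ x, Z x ∂P) := by
  have ha0 : 0 < a := by linarith
  let G : ℝ → ℝ := fun b => ∫ x, Real.exp (-(b * Z x)) ∂P
  let D : ℝ → ℝ := fun b => ∫ x, Z x * Real.exp (-(b * Z x)) ∂P
  let q : ℝ → ℝ := fun b => b - a * b ^ 2 / 2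
  have hei : ∀ b, 0 ≤ b → Integrable (fun x => Real.exp (-(b * Z x))) P := fun b hb =>
    Integrable.of_bound (by fun_prop) 1 (ae_of_all _ fun x => by
      rw [Real.norm_eq_abs, abs_of_pos (Real.exp_pos _)]
      exact Real.exp_le_one_iff.2 (by have := hZ0 x; nlinarith))
  have hG0 : ∀ b, 0 ≤ b → 0 < G b := fun b hb => integral_exp_pos (hei b hb)
  have hD0 : ∀ b, 0 ≤ D b := fun b =>
    integral_nonneg fun x => mul_nonneg (hZ0 x) (Real.exp_pos _).le
  have hGd : ∀ b, 0 < b → HasDerivAt G (-D b) b := by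
    intro b hb
    have hmem : b ∈ interior (ProbabilityTheory.integrableExpSet (fun x => -Z x) P) := by
      rw [mem_interior_iff_mem_nhds]
      filter_upwards [Ioi_mem_nhds hb] with c hc
      simpa [ProbabilityTheory.integrableExpSet] using hei c (le_of_lt hc)
    have h := ProbabilityTheory.hasDerivAt_mgf hmem
    have e1 : ProbabilityTheory.mgf (fun x => -Z x) P = G := by
      ext c; simp [ProbabilityTheory.mgf, G]
    have e2 : ∫ x, -Z x * Real.exp (b * -Z x) ∂P = -D b := by
      simp only [D, ← integral_neg]; congr 1; ext x; simp
    rw [e1, e2] at h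
    exact h
  have hq0 : ∀ c ∈ Ioc 0 (1 / a), 0 < q c := by
    rintro c ⟨h0, h1⟩
    have : a * c ≤ 1 := by rw [le_div_iff₀ ha0] at h1; linarith
    simp only [q]; nlinarith
  have hLd : ∀ c ∈ Ioc 0 (1 / a), HasDerivAt (fun c => -Real.log (G c) / q c)
      ((-(-D c / G c) * q c - -Real.log (G c) * (1 - a * c)) / q c ^ 2) c := by
    intro c hc
    have hqd : HasDerivAt q (1 - a * c) c := by
      refine HasDerivAt.congr_deriv (f := q)
        ((hasDerivAt_id c).sub (((hasDerivAt_pow 2 c).const_mul a).div_const 2)) ?_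
      norm_num
      ring
    exact (((hGd c hc.1).log (hG0 c hc.1.le).ne').neg).div hqd (hq0 c hc).ne'
  have hmono : MonotoneOn (fun c => -Real.log (G c) / q c) (Ioc 0 (1 / a)) := by
    refine monotoneOn_of_deriv_nonneg (convex_Ioc _ _)
      (fun c hc => (hLd c hc).continuousAt.continuousWithinAt)
      (fun c hc => (hLd c (interior_subset hc)).differentiableAt.differentiableWithinAt) ?_
    intro c hc
    replace hc := interior_subset hc
    rw [(hLd c hc).deriv]
    refine div_nonneg ?_ (sq_nonneg _)
    have hc0 : 0 < c := hc.1
    have hac : a * c ≤ 1 := by have := hc.2; rw [le_div_iff₀ ha0] at this; linarith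
    have hc1 : c ≤ 1 := by nlinarith
    have hG := hG0 c hc0.le
    have hs : -Real.log (G c) ≤ (c + a * (c ^ 2 / 2 + 2 * c ^ 3 / 9)) * (D c / G c) := by
      rw [← mul_div_assoc, le_div_iff₀ hG]; exact hself c hc0.le hc1
    have hD : 0 ≤ D c / G c := div_nonneg (hD0 c) hG.le
    have hs2 := mul_le_mul_of_nonneg_right hs (sub_nonneg.2 hac)
    -- The quadratic terms cancel; `a ≥ 1` makes the cubic term on the left nonpositive.
    have hpoly : (c + a * (c ^ 2 / 2 + 2 * c ^ 3 / 9)) * (1 - a * c) ≤ q c := by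
      have h3 : 0 ≤ a * c ^ 3 := by positivity
      have h4 : 0 ≤ a * c ^ 3 * (a - 1) := mul_nonneg h3 (by linarith)
      have h5 : 0 ≤ a ^ 2 * c ^ 4 := by positivity
      simp only [q]; nlinarith
    have hs3 := mul_le_mul_of_nonneg_left hpoly hD
    rw [neg_div, neg_neg]
    linarith
  have hlim : Tendsto (fun c : ℝ => ∫ x, (1 - Real.exp (-(c * Z x))) / c ∂P) (𝓝[>] 0)
      (𝓝 (∫ x, Z x ∂P)) := by
    refine tendsto_integral_filter_of_dominated_convergence Z
      (Eventually.of_forall fun c => by fun_prop) ?_ hint (ae_of_all _ fun x => ?_)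
    · filter_upwards [self_mem_nhdsWithin] with c hc
      have hc : 0 < c := hc
      refine ae_of_all _ fun x => ?_
      have h1 := Real.add_one_le_exp (-(c * Z x))
      have h2 : Real.exp (-(c * Z x)) ≤ 1 := Real.exp_le_one_iff.2 (by have := hZ0 x; nlinarith)
      rw [Real.norm_eq_abs, abs_of_nonneg (div_nonneg (by linarith) hc.le), div_le_iff₀ hc]
      linarith
    · have hd : HasDerivAt (fun c : ℝ => -Real.exp (-(c * Z x))) (Z x) 0 := by
        refine HasDerivAt.congr_deriv (f := fun c : ℝ => -Real.exp (-(c * Z x)))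
          (((hasDerivAt_id (0 : ℝ)).mul_const (Z x)).neg.exp).neg ?_
        simp
      have := hd.tendsto_slope_zero_right
      refine this.congr fun c => ?_
      simp only [smul_eq_mul, zero_add, zero_mul, neg_zero, Real.exp_zero]
      ring
  have hle : ∫ x, Z x ∂P ≤ -Real.log (G b) / q b := by
    refine le_of_tendsto hlim ?_
    filter_upwards [Ioc_mem_nhdsGT hb0] with c hc
    have hc' : c ∈ Ioc 0 (1 / a) := ⟨hc.1, hc.2.trans hb1⟩
    refine le_trans ?_ (hmono hc' ⟨hb0, hb1⟩ hc.2)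
    have hqc : q c ≤ c := by simp only [q]; nlinarith [mul_nonneg ha0.le (sq_nonneg c)]
    have hlog := Real.log_le_sub_one_of_pos (hG0 c hc.1.le)
    have hG1 : G c ≤ 1 := by
      have := integral_mono (hei c hc.1.le) (integrable_const (1 : ℝ)) (fun x =>
        Real.exp_le_one_iff.2 (by have := mul_nonneg hc.1.le (hZ0 x); linarith))
      simpa using this
    rw [integral_div, integral_sub (integrable_const _) (hei c hc.1.le)]
    simp only [integral_const, probReal_univ, smul_eq_mul, mul_one]
    change (1 - G c) / c ≤ _
    calc (1 - G c) / c ≤ (1 - G c) / q c :=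
          div_le_div_of_nonneg_left (by linarith) (hq0 c hc') hqc
      _ ≤ _ := div_le_div_of_nonneg_right (by linarith) (hq0 c hc').le
  rw [le_div_iff₀ (hq0 b ⟨hb0, hb1⟩)] at hle
  change Real.log (G b) ≤ -(q b * _)
  linarith

/-- **Concentration for self-bounding random variables, lower tail** (Theorem 8, first part):
if `Z` satisfies `Z(X) - inf_y Z(X_{y,k}) ≤ 1` for all `k` and
`∑ₖ (Z(X) - inf_y Z(X_{y,k}))² ≤ a Z(X)` almost surely, with `a ≥ 1`, then for `t > 0`,
`Pr{𝔼Z - Z > t} ≤ exp(-t² / (2a 𝔼Z))`. -/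
theorem self_bounding_lower_tail (𝒳 : Type*) [MeasurableSpace 𝒳] [Nonempty 𝒳]
    (n : ℕ) (μ : Fin n → Measure 𝒳) [∀ k, IsProbabilityMeasure (μ k)]
    (Z : (Fin n → 𝒳) → ℝ) (hZ : Measurable Z)
    (hint : Integrable Z (Measure.pi μ)) (a : ℝ) (ha : 1 ≤ a)
    (h1 : ∀ᵐ X ∂Measure.pi μ, ∀ k, Z X - ⨅ y, Z (Function.update X k y) ≤ 1)
    (h2 : ∀ᵐ X ∂Measure.pi μ,
      ∑ k, (Z X - ⨅ y, Z (Function.update X k y)) ^ 2 ≤ a * Z X)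
    (t : ℝ) (ht : 0 < t) :
    ((Measure.pi μ) {X | (∫ x, Z x ∂Measure.pi μ) - Z X > t}).toReal ≤
      Real.exp (-t ^ 2 / (2 * a * ∫ x, Z x ∂Measure.pi μ)) := by
  have ha0 : 0 < a := by linarith
  have hZpos : ∀ᵐ X ∂Measure.pi μ, 0 ≤ Z X := by
    filter_upwards [h2] with X hX
    have : 0 ≤ a * Z X := (Finset.sum_nonneg fun k _ => sq_nonneg _).trans hX
    exact nonneg_of_mul_nonneg_right this ha0
  set P := Measure.pi μ with hP
  set E := ∫ x, Z x ∂P with hE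
  have hEnn : 0 ≤ E := integral_nonneg_of_ae hZpos
  rcases hEnn.eq_or_lt with hE0 | hE0
  · -- The exponent is a division by zero, so the right-hand side is `1`.
    rw [← hE0]
    simp only [mul_zero, div_zero, Real.exp_zero]
    exact measureReal_le_one
  rcases le_or_gt E t with hEt | hEt
  · have : P {X | E - Z X > t} = 0 := by
      have : ∀ᵐ X ∂P, ¬ (E - Z X > t) := by
        filter_upwards [hZpos] with X hX
        linarith
      rw [ae_iff] at this
      simpa only [not_not] using this
    rw [this]
    simpa using (Real.exp_pos _).le
  -- `Z` may be negative on a null set, where `exp (-b Z)` could be large.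
  let Z' : (Fin n → 𝒳) → ℝ := fun X => max (Z X) 0
  have hZ' : Measurable Z' := hZ.max measurable_const
  have hZ'0 : ∀ X, 0 ≤ Z' X := fun X => le_max_right _ _
  have hZZ' : Z =ᵐ[P] Z' := by
    filter_upwards [hZpos] with X hX
    simp [Z', hX]
  choose M hMm hMk hMle hMge using fun k =>
    exists_coordinate_essInf μ (fun X => ENNReal.ofReal (Z X)) hZ.ennreal_ofReal k
  have hMle' : ∀ᵐ X ∂P, ∀ k, M k X ≤ ENNReal.ofReal (Z X) := ae_all_iff.2 hMle
  have hmle : ∀ᵐ X ∂P, ∀ k, (M k X).toReal ≤ Z' X := by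
    filter_upwards [hMle'] with X hX k
    exact (ENNReal.toReal_mono ENNReal.ofReal_ne_top (hX k)).trans_eq (ENNReal.toReal_ofReal')
  have hmge : ∀ᵐ X ∂P, ∀ k, ⨅ y, Z (update X k y) ≤ (M k X).toReal := by
    filter_upwards [hMle'] with X hX k
    have hfin : M k X ≠ ∞ := ne_top_of_le_ne_top ENNReal.ofReal_ne_top (hX k)
    rw [← ENNReal.ofReal_le_iff_le_toReal hfin]
    by_cases hb : BddBelow (range fun y => Z (update X k y))
    · exact hMge k X _ fun y => ENNReal.ofReal_le_ofReal (ciInf_le hb y)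
    · -- Along a line on which `Z` is unbounded below, the real infimum has the value `0`.
      rw [Real.iInf_of_not_bddBelow hb]; simp
  have hself : ∀ b, 0 ≤ b → b ≤ 1 →
      -Real.log (∫ x, Real.exp (-(b * Z' x)) ∂P) * ∫ x, Real.exp (-(b * Z' x)) ∂P ≤
      (b + a * (b ^ 2 / 2 + 2 * b ^ 3 / 9)) * ∫ x, Z' x * Real.exp (-(b * Z' x)) ∂P := by
    intro b hb0 hb1
    refine log_laplace_self_bound μ hZ' hZ'0 (hint.congr hZZ')
      (m := fun k X => (M k X).toReal) (fun k => (hMm k).ennreal_toReal)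
      (fun k X => ENNReal.toReal_nonneg) (fun k X y => by simp only [hMk]) hmle ?_ ?_ hb0 hb1
    · filter_upwards [h1, hmge, hZZ'] with X h1 hge hz k
      rw [← hz]
      linarith [h1 k, hge k]
    · filter_upwards [h2, hmge, hmle, hZZ'] with X h2 hge hle hz
      rw [← hz] at hle ⊢
      refine (Finset.sum_le_sum fun k _ => ?_).trans h2
      exact pow_le_pow_left₀ (sub_nonneg.2 (hle k)) (by linarith [hge k]) 2
  have hE' : ∫ x, Z' x ∂P = E := (integral_congr_ae hZZ').symm
  -- The minimizer of `-b t + a b² 𝔼 Z / 2`.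
  let b : ℝ := t / (a * E)
  have hb0 : 0 < b := by positivity
  have hb1 : b ≤ 1 / a := by
    rw [div_le_div_iff₀ (by positivity) ha0]
    nlinarith
  have hlog := log_laplace_le P hZ' hZ'0 (hint.congr hZZ') ha hself hb0 hb1
  have hei : Integrable (fun x => Real.exp (-(b * Z' x))) P :=
    Integrable.of_bound (by fun_prop) 1 (ae_of_all _ fun x => by
      rw [Real.norm_eq_abs, abs_of_pos (Real.exp_pos _)]
      exact Real.exp_le_one_iff.2 (by have := mul_nonneg hb0.le (hZ'0 x); linarith))
  have hG := integral_exp_pos hei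
  rw [hE', Real.log_le_iff_le_exp hG] at hlog
  have hchern := ProbabilityTheory.measure_ge_le_exp_mul_mgf (μ := P) (X := fun x => -Z' x)
    (t - E) hb0.le (by simpa using hei)
  have hmgf : ProbabilityTheory.mgf (fun x => -Z' x) P b = ∫ x, Real.exp (-(b * Z' x)) ∂P := by
    simp [ProbabilityTheory.mgf]
  rw [hmgf] at hchern
  calc (P {X | E - Z X > t}).toReal ≤ P.real {X | t - E ≤ -Z' X} := by
        refine ENNReal.toReal_mono (measure_ne_top _ _) (measure_mono_ae ?_)
        filter_upwards [hZZ'] with X hz hX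
        have hX : E - Z X > t := hX
        change t - E ≤ -Z' X
        rw [← hz]; linarith
    _ ≤ Real.exp (-b * (t - E)) * Real.exp (-((b - a * b ^ 2 / 2) * E)) :=
        hchern.trans (mul_le_mul_of_nonneg_left hlog (Real.exp_pos _).le)
    _ = Real.exp (-t ^ 2 / (2 * a * E)) := by
        rw [← Real.exp_add]
        congr 1
        simp only [b]
        field_simp
        ring
end

section
/- Let X = (X_1, ..., X_n) be a vector of independent random variables with values in a set 𝒳. Suppose a ≥ 1 and Z = Z(X) is a measurable real-valued function with finite expectation satisfying almost surely the self-boundedness condition ∑_{k=1}^n (Z(X) − inf_{y ∈ 𝒳} Z(X_{y,k}))^2 ≤ a·Z(X). Then for every t > 0, Pr{Z − E[Z] > t} ≤ exp(−t² / (2a·E[Z] + a·t)). -/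
open MeasureTheory

/-!
The proof is the entropy method. Write `G β = log E exp (β Y)`.

*Reduction to bounded `Y`.* The condition forces `Z ≥ 0` almost surely, and it survives clipping
`Z` to `[0, M]` (`clip_selfBounding`). With `M = E Z + t` the clipped variable `Y` satisfies
`E Y ≤ E Z`, and the event `Z > E Z + t` is contained in `Y ≥ E Z + t`, so that no exponential
moments of `Z` itself are needed. The pointwise infimum over a coordinate need not be measurable, so
it is replaced by the larger essential infimum `coordInf`, which is still almost surely at most `Y`.

*Entropy.* Tensorization (`entropy_tensorization`) bounds the entropy of `exp (β Y)` by the sum over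
`k` of the expectations of `f log (f / g k) - f + g k`, where `f = exp (β Y)` and
`g k = exp (β * coordInf k)`. Since `exp (-x) ≤ 1 - x + x² / 2` for `x ≥ 0`, self-boundedness gives
`β E[Y exp (β Y)] - E[exp (β Y)] G β ≤ (a β² / 2) E[Y exp (β Y)]` (`entropy_exp_le`).

*Herbst's argument.* This integrates to `G β / β - (a / 2) G β ≤ E Y` (`cgf_le`), and Chernoff's
bound at `β = t / (a E Z + a t / 2)` is the claim.
-/

namespace SelfBounding

open Function ProbabilityTheory

variable {𝒳 : Type*} [MeasurableSpace 𝒳] {n : ℕ} {μ : Fin n → Measure 𝒳}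

/-! ### Averaging over one coordinate -/

/-- Resampling the `k`-th coordinate preserves the product measure. -/
lemma measurePreserving_update [∀ k, IsProbabilityMeasure (μ k)] (k : Fin n) :
    MeasurePreserving (fun p : (Fin n → 𝒳) × 𝒳 => update p.1 k p.2)
      ((Measure.pi μ).prod (μ k)) (Measure.pi μ) := by
  have hm : Measurable (fun p : (Fin n → 𝒳) × 𝒳 => update p.1 k p.2) := measurable_update'
  refine ⟨hm, ?_⟩
  symm
  refine Measure.pi_eq fun s hs => ?_
  rw [Measure.map_apply hm (MeasurableSet.univ_pi hs)]
  have : (fun p : (Fin n → 𝒳) × 𝒳 => update p.1 k p.2) ⁻¹' Set.univ.pi s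
      = (Set.univ.pi (update s k Set.univ)) ×ˢ s k := by
    ext ⟨X, y⟩
    simp only [Set.mem_preimage, Set.mem_pi, Set.mem_univ, true_imp_iff, Set.mem_prod]
    constructor
    · intro h
      refine ⟨fun i => ?_, by simpa using h k⟩
      rcases eq_or_ne i k with rfl | hi
      · simp
      · simpa [hi] using h i
    · rintro ⟨h, hy⟩ i
      rcases eq_or_ne i k with rfl | hi
      · simpa using hy
      · simpa [hi] using h i
  rw [this, Measure.prod_prod, Measure.pi_pi, ← Finset.prod_erase_mul _ _ (Finset.mem_univ k),
    ← Finset.prod_erase_mul (a := k) _ (fun i => μ i (s i)) (Finset.mem_univ k)]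
  simp only [update_self, measure_univ, mul_one]
  congr 1
  refine Finset.prod_congr rfl fun i hi => ?_
  rw [update_of_ne (Finset.ne_of_mem_erase hi)]

lemma integrable_of_bdd {Ω : Type*} [MeasurableSpace Ω] {P : Measure Ω} [IsFiniteMeasure P]
    {f : Ω → ℝ} (hf : Measurable f) (a b : ℝ) (h : ∀ x, a ≤ f x ∧ f x ≤ b) : Integrable f P :=
  Integrable.of_bound hf.aestronglyMeasurable (max |a| |b|)
    (.of_forall fun x => by
      rw [Real.norm_eq_abs]; exact abs_le_max_abs_abs (h x).1 (h x).2)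

/-- Integrating a function of `X` over its `k`-th coordinate only. -/
noncomputable def avg (μ : Fin n → Measure 𝒳) (k : Fin n) (F : (Fin n → 𝒳) → ℝ)
    (X : Fin n → 𝒳) : ℝ :=
  ∫ y, F (update X k y) ∂μ k

lemma measurable_avg [∀ k, IsProbabilityMeasure (μ k)]
    (k : Fin n) {F : (Fin n → 𝒳) → ℝ} (hF : Measurable F) :
    Measurable (avg μ k F) := by
  have := (hF.comp (measurable_update' (a := k) (X := fun _ : Fin n => 𝒳))).stronglyMeasurable
  exact (this.integral_prod_right' (ν := μ k)).measurable

lemma integral_avg [∀ k, IsProbabilityMeasure (μ k)]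
    (k : Fin n) {F : (Fin n → 𝒳) → ℝ} (hF : Measurable F)
    (hi : Integrable F (Measure.pi μ)) :
    ∫ X, avg μ k F X ∂Measure.pi μ = ∫ X, F X ∂Measure.pi μ := by
  have hp := measurePreserving_update (μ := μ) k
  rw [← hp.map_eq, integral_map hp.measurable.aemeasurable hF.aestronglyMeasurable, integral_prod]
  · rw [hp.map_eq]; rfl
  · exact hp.integrable_comp_of_integrable hi

lemma avg_mem [∀ k, IsProbabilityMeasure (μ k)]
    (k : Fin n) {F : (Fin n → 𝒳) → ℝ} (hF : Measurable F) {a b : ℝ}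
    (h : ∀ X, a ≤ F X ∧ F X ≤ b) (X) : a ≤ avg μ k F X ∧ avg μ k F X ≤ b := by
  have hi : Integrable (fun y => F (update X k y)) (μ k) :=
    integrable_of_bdd (hF.comp (measurable_update X)) a b fun y => h _
  constructor
  · simpa [avg] using integral_mono (integrable_const a) hi (fun y => (h (update X k y)).1)
  · simpa [avg] using integral_mono hi (integrable_const b) (fun y => (h (update X k y)).2)

lemma avg_update_self (k : Fin n) (F : (Fin n → 𝒳) → ℝ) (X) (z : 𝒳) :
    avg μ k F (update X k z) = avg μ k F X := by
  simp [avg]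

lemma avg_update_of_invariant (k j : Fin n) {F : (Fin n → 𝒳) → ℝ}
    (h : ∀ X z, F (update X j z) = F X) (X) (z : 𝒳) :
    avg μ k F (update X j z) = avg μ k F X := by
  rcases eq_or_ne j k with rfl | hjk
  · exact avg_update_self _ _ _ _
  · simp only [avg]
    congr 1
    ext y
    rw [update_comm hjk, h]

/-! ### Tensorization of entropy -/

/-- One step of the tensorization of entropy. Since `F / avg F` has mean one in the `k`-th
coordinate and `g` does not depend on that coordinate, the inequality follows by integrating
`log x ≤ x - 1` at `x = g F / (f avg F)`. The hypothesis `hint` records the integrability of the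
products that occur, which holds for all measurable functions with values in `[1, C]`. -/
lemma entropy_step [∀ k, IsProbabilityMeasure (μ k)] (k : Fin n) {f F g : (Fin n → 𝒳) → ℝ} {C : ℝ}
    (hf : Measurable f) (hF : Measurable F) (hg : Measurable g)
    (hfb : ∀ X, 1 ≤ f X ∧ f X ≤ C) (hFb : ∀ X, 1 ≤ F X ∧ F X ≤ C) (hgb : ∀ X, 1 ≤ g X ∧ g X ≤ C)
    (hgk : ∀ X z, g (update X k z) = g X)
    (hint : ∀ u v : (Fin n → 𝒳) → ℝ, Measurable u → Measurable v → (∀ X, 1 ≤ u X ∧ u X ≤ C) →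
      (∀ X, 1 ≤ v X ∧ v X ≤ C) → Integrable (fun X => u X * Real.log (v X)) (Measure.pi μ)) :
    ∫ X, f X * Real.log (F X) ∂Measure.pi μ - ∫ X, f X * Real.log (avg μ k F X) ∂Measure.pi μ
      ≤ ∫ X, (f X * Real.log (f X) - f X * Real.log (g X) - f X + g X) ∂Measure.pi μ := by
  have hA := measurable_avg (μ := μ) k hF
  have hAb := avg_mem (μ := μ) k hF hFb
  have hif : Integrable f (Measure.pi μ) := integrable_of_bdd hf _ _ hfb
  have hig : Integrable g (Measure.pi μ) := integrable_of_bdd hg _ _ hgb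
  have hq : Measurable fun X => g X * F X / avg μ k F X := (hg.mul hF).div hA
  have hiq : Integrable (fun X => g X * F X / avg μ k F X) (Measure.pi μ) := by
    refine integrable_of_bdd hq 0 (C * C) fun X => ?_
    have h1 := hfb X; have h2 := hFb X; have h3 := hgb X; have h4 := hAb X
    refine ⟨by apply div_nonneg <;> nlinarith, ?_⟩
    rw [div_le_iff₀ (by linarith)]
    have : g X * F X ≤ C * C := by nlinarith
    nlinarith
  have key : ∫ X, g X * F X / avg μ k F X ∂Measure.pi μ = ∫ X, g X ∂Measure.pi μ := by
    rw [← integral_avg k hq hiq]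
    congr 1
    ext X
    have h4 := hAb X
    unfold avg at h4
    simp only [avg, hgk, update_idem, mul_div_assoc]
    rw [integral_const_mul, integral_div, div_self (by linarith), mul_one]
  rw [← integral_sub (hint f F hf hF hfb hFb) (hint f _ hf hA hfb hAb)]
  have i1 := hint f f hf hf hfb hfb
  have i2 := hint f g hf hg hfb hgb
  have i3 : Integrable (fun X => f X * Real.log (f X) - f X * Real.log (g X) - f X)
      (Measure.pi μ) := (i1.sub i2).sub hif
  have e : ∫ X, (f X * Real.log (f X) - f X * Real.log (g X) - f X + g X) ∂Measure.pi μ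
      = ∫ X, (f X * Real.log (f X) - f X * Real.log (g X) - f X + g X * F X / avg μ k F X)
        ∂Measure.pi μ := by
    rw [integral_add i3 hig, integral_add i3 hiq, key]
  rw [e]
  refine integral_mono ((hint f F hf hF hfb hFb).sub (hint f _ hf hA hfb hAb))
    (i3.add hiq) fun X => ?_
  have h1 := (hfb X).1; have h2 := (hFb X).1; have h3 := (hgb X).1; have h4 := (hAb X).1
  have hx : 0 < g X * F X / (avg μ k F X * f X) := by positivity
  have hl := Real.log_le_sub_one_of_pos hx
  rw [Real.log_div (by positivity) (by positivity), Real.log_mul (by positivity) (by positivity),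
    Real.log_mul (by positivity) (by positivity)] at hl
  have := mul_le_mul_of_nonneg_left hl (by linarith : 0 ≤ f X)
  have e2 : f X * (g X * F X / (avg μ k F X * f X) - 1) = g X * F X / avg μ k F X - f X := by
    have : avg μ k F X ≠ 0 := by positivity
    have : f X ≠ 0 := by positivity
    field_simp
  rw [e2] at this
  simp only
  linarith

/-- Tensorization of entropy in variational form: the entropy of `f` is at most the sum of the
expected coordinatewise entropies, each bounded through an arbitrary comparison function `g k` that
does not depend on the `k`-th coordinate. -/
lemma entropy_tensorization [∀ k, IsProbabilityMeasure (μ k)]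
    {f : (Fin n → 𝒳) → ℝ} {g : Fin n → (Fin n → 𝒳) → ℝ} {C : ℝ}
    (hf : Measurable f) (hg : ∀ k, Measurable (g k))
    (hfb : ∀ X, 1 ≤ f X ∧ f X ≤ C) (hgb : ∀ k X, 1 ≤ g k X ∧ g k X ≤ C)
    (hgk : ∀ k X z, g k (update X k z) = g k X) :
    ∫ X, f X * Real.log (f X) ∂Measure.pi μ
        - (∫ X, f X ∂Measure.pi μ) * Real.log (∫ X, f X ∂Measure.pi μ)
      ≤ ∫ X, ∑ k, (f X * Real.log (f X) - f X * Real.log (g k X) - f X + g k X)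
        ∂Measure.pi μ := by
  have hint : ∀ u v : (Fin n → 𝒳) → ℝ, Measurable u → Measurable v → (∀ X, 1 ≤ u X ∧ u X ≤ C) →
      (∀ X, 1 ≤ v X ∧ v X ≤ C) → Integrable (fun X => u X * Real.log (v X)) (Measure.pi μ) := by
    intro u v hu hv hub hvb
    refine integrable_of_bdd (hu.mul hv.log) 0 (C * Real.log C) fun X => ?_
    have h1 := hub X; have h2 := hvb X
    have h3 := Real.log_nonneg h2.1
    have h4 : Real.log (v X) ≤ Real.log C := Real.log_le_log (by linarith) h2.2
    exact ⟨mul_nonneg (by linarith) h3, mul_le_mul h1.2 h4 h3 (by linarith)⟩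
  -- Average out the coordinates one at a time; `F` is the average over the coordinates in `S`.
  have main : ∀ S : Finset (Fin n), ∃ F : (Fin n → 𝒳) → ℝ, Measurable F ∧
      (∀ X, 1 ≤ F X ∧ F X ≤ C) ∧ (∀ k ∈ S, ∀ X z, F (update X k z) = F X) ∧
      ∫ X, F X ∂Measure.pi μ = ∫ X, f X ∂Measure.pi μ ∧
      ∫ X, f X * Real.log (f X) ∂Measure.pi μ - ∫ X, f X * Real.log (F X) ∂Measure.pi μ
        ≤ ∑ k ∈ S, ∫ X, (f X * Real.log (f X) - f X * Real.log (g k X) - f X + g k X)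
          ∂Measure.pi μ := by
    intro S
    induction S using Finset.induction_on with
    | empty => exact ⟨f, hf, hfb, by simp, rfl, by simp⟩
    | insert k S hk ih =>
      obtain ⟨F, hF, hFb, hinv, hI, hle⟩ := ih
      refine ⟨avg μ k F, measurable_avg k hF, avg_mem k hF hFb, ?_, ?_, ?_⟩
      · intro j hj
        rcases Finset.mem_insert.1 hj with rfl | hj
        · exact avg_update_self _ _
        · exact avg_update_of_invariant k j (hinv j hj)
      · rw [integral_avg k hF (integrable_of_bdd hF _ _ hFb), hI]
      · rw [Finset.sum_insert hk]
        have := entropy_step k hf hF (hg k) hfb hFb (hgb k) (hgk k) hint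
        linarith
  obtain ⟨F, hF, hFb, hinv, hI, hle⟩ := main Finset.univ
  have hconst : ∀ X X₁, F X = F X₁ := by
    intro X X₁
    have : ∀ S : Finset (Fin n), F (S.piecewise X₁ X) = F X := by
      intro S
      induction S using Finset.induction_on with
      | empty => simp
      | insert k S hk ih =>
        rw [Finset.piecewise_insert, hinv k (Finset.mem_univ k), ih]
    have h := this Finset.univ
    rw [Finset.piecewise_univ] at h
    exact h.symm
  have hF' : ∀ X, F X = ∫ X, f X ∂Measure.pi μ := by
    intro X
    rw [← hI, integral_congr_ae (.of_forall fun X₁ => hconst X₁ X)]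
    simp
  simp only [hF', integral_mul_const] at hle
  rw [integral_finsetSum]
  · exact hle
  · intro k _
    exact (((hint f f hf hf hfb hfb).sub (hint f _ hf (hg k) hfb (hgb k))).sub
      (integrable_of_bdd hf _ _ hfb)).add (integrable_of_bdd (hg k) _ _ (hgb k))


/-! ### Exponential moments of a bounded self-bounding variable -/

lemma exp_neg_le_quadratic {x : ℝ} (hx : 0 ≤ x) : Real.exp (-x) ≤ 1 - x + x ^ 2 / 2 := by
  have h := Real.quadratic_le_exp_of_nonneg hx
  have hp := Real.exp_pos (-x)
  have h1 : Real.exp (-x) * Real.exp x = 1 := by rw [← Real.exp_add]; simp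
  have h2 : Real.exp (-x) * (1 + x + x ^ 2 / 2) ≤ 1 := by
    exact (mul_le_mul_of_nonneg_left h hp.le).trans_eq h1
  have h3 : 1 ≤ (1 - x + x ^ 2 / 2) * (1 + x + x ^ 2 / 2) := by nlinarith [sq_nonneg (x ^ 2)]
  exact le_of_mul_le_mul_right (h2.trans h3) (by positivity)

/-- The entropy of `exp (β Y)` for a bounded self-bounding `Y`, where `V k` is a lower bound of `Y`
that does not depend on the `k`-th coordinate. -/
lemma entropy_exp_le [∀ k, IsProbabilityMeasure (μ k)]
    {Y : (Fin n → 𝒳) → ℝ} {V : Fin n → (Fin n → 𝒳) → ℝ} {M a β : ℝ}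
    (hY : Measurable Y) (hV : ∀ k, Measurable (V k)) (hYb : ∀ X, 0 ≤ Y X ∧ Y X ≤ M)
    (hVb : ∀ k X, 0 ≤ V k X ∧ V k X ≤ M) (hVk : ∀ k X z, V k (update X k z) = V k X)
    (hVY : ∀ k, ∀ᵐ X ∂Measure.pi μ, V k X ≤ Y X)
    (hsb : ∀ᵐ X ∂Measure.pi μ, ∑ k, (Y X - V k X) ^ 2 ≤ a * Y X) (hβ : 0 ≤ β) :
    β * (∫ X, Y X * Real.exp (β * Y X) ∂Measure.pi μ)
        - mgf Y (Measure.pi μ) β * Real.log (mgf Y (Measure.pi μ) β)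
      ≤ a * β ^ 2 / 2 * ∫ X, Y X * Real.exp (β * Y X) ∂Measure.pi μ := by
  have hb : ∀ W : (Fin n → 𝒳) → ℝ, (∀ X, 0 ≤ W X ∧ W X ≤ M) →
      ∀ X, 1 ≤ Real.exp (β * W X) ∧ Real.exp (β * W X) ≤ Real.exp (β * M) := fun W hW X =>
    ⟨Real.one_le_exp (mul_nonneg hβ (hW X).1),
      Real.exp_le_exp.2 (mul_le_mul_of_nonneg_left (hW X).2 hβ)⟩
  have hm : ∀ W : (Fin n → 𝒳) → ℝ, Measurable W → Measurable fun X => Real.exp (β * W X) :=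
    fun W hW => (hW.const_mul β).exp
  have hiY : Integrable (fun X => Y X * Real.exp (β * Y X)) (Measure.pi μ) := by
    refine integrable_of_bdd (hY.mul (hm Y hY)) 0 (M * Real.exp (β * M)) fun X => ?_
    have h1 := hYb X; have h2 := hb Y hYb X
    exact ⟨mul_nonneg h1.1 (by linarith), mul_le_mul h1.2 h2.2 (by linarith) (by linarith)⟩
  have key := entropy_tensorization (μ := μ) (f := fun X => Real.exp (β * Y X))
    (g := fun k X => Real.exp (β * V k X)) (hm Y hY) (fun k => hm _ (hV k)) (hb Y hYb)
    (fun k => hb _ (hVb k)) (fun k X z => by simp only [hVk])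
  simp only [Real.log_exp] at key
  have e1 : ∫ X, Real.exp (β * Y X) * (β * Y X) ∂Measure.pi μ
      = β * ∫ X, Y X * Real.exp (β * Y X) ∂Measure.pi μ := by
    rw [← integral_const_mul]; congr 1; ext X; ring
  rw [e1] at key
  refine key.trans ?_
  rw [← integral_const_mul]
  have hnn : ∀ k X, 0 ≤ Real.exp (β * Y X) * (β * Y X) - Real.exp (β * Y X) * (β * V k X)
      - Real.exp (β * Y X) + Real.exp (β * V k X) := by
    intro k X
    have h := Real.add_one_le_exp (β * V k X - β * Y X)
    have h2 := mul_le_mul_of_nonneg_left h (Real.exp_pos (β * Y X)).le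
    rw [← Real.exp_add] at h2
    have : β * Y X + (β * V k X - β * Y X) = β * V k X := by ring
    rw [this] at h2
    linarith
  refine integral_mono_of_nonneg (.of_forall fun X => Finset.sum_nonneg fun k _ => hnn k X)
    (hiY.const_mul _) ?_
  filter_upwards [ae_all_iff.2 hVY, hsb] with X hX hs
  have hterm : ∀ k, Real.exp (β * Y X) * (β * Y X) - Real.exp (β * Y X) * (β * V k X)
      - Real.exp (β * Y X) + Real.exp (β * V k X)
      ≤ β ^ 2 / 2 * Real.exp (β * Y X) * (Y X - V k X) ^ 2 := by
    intro k
    have h := exp_neg_le_quadratic (mul_nonneg hβ (sub_nonneg.2 (hX k)))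
    have h2 := mul_le_mul_of_nonneg_left h (Real.exp_pos (β * Y X)).le
    rw [← Real.exp_add] at h2
    have : β * Y X + -(β * (Y X - V k X)) = β * V k X := by ring
    rw [this] at h2
    linarith
  calc _ ≤ ∑ k, β ^ 2 / 2 * Real.exp (β * Y X) * (Y X - V k X) ^ 2 :=
        Finset.sum_le_sum fun k _ => hterm k
    _ = β ^ 2 / 2 * Real.exp (β * Y X) * ∑ k, (Y X - V k X) ^ 2 := by rw [Finset.mul_sum]
    _ ≤ β ^ 2 / 2 * Real.exp (β * Y X) * (a * Y X) :=
        mul_le_mul_of_nonneg_left hs (by positivity)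
    _ = _ := by ring

/-- Herbst's argument: the entropy inequality says that `β ↦ G β / β - a / 2 * G β` has nonpositive
derivative on `β > 0`, where `G` is the cumulant generating function, and this function tends to
`E Y` as `β` decreases to `0`. -/
lemma cgf_le {Ω : Type*} [MeasurableSpace Ω] {P : Measure Ω} [IsProbabilityMeasure P] {Y : Ω → ℝ}
    {M a : ℝ} (hY : Measurable Y) (hYb : ∀ x, 0 ≤ Y x ∧ Y x ≤ M)
    (hent : ∀ β, 0 < β → β * (∫ x, Y x * Real.exp (β * Y x) ∂P) - mgf Y P β * Real.log (mgf Y P β)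
      ≤ a * β ^ 2 / 2 * ∫ x, Y x * Real.exp (β * Y x) ∂P) {β : ℝ} (hβ : 0 < β) :
    cgf Y P β / β - a / 2 * cgf Y P β ≤ ∫ x, Y x ∂P := by
  have hie : ∀ s, Integrable (fun x => Real.exp (s * Y x)) P := by
    intro s
    refine integrable_of_bdd (hY.const_mul s).exp 0 (Real.exp (|s| * M)) fun x =>
      ⟨(Real.exp_pos _).le, Real.exp_le_exp.2 ?_⟩
    exact mul_le_mul (le_abs_self s) (hYb x).2 (hYb x).1 (abs_nonneg s)
  have hset : integrableExpSet Y P = Set.univ := Set.eq_univ_of_forall hie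
  have hmem : ∀ s, s ∈ interior (integrableExpSet Y P) := by simp [hset]
  have hpos : ∀ s, 0 < mgf Y P s := fun s => mgf_pos (hie s)
  have hG : ∀ s, HasDerivAt (cgf Y P)
      ((∫ x, Y x * Real.exp (s * Y x) ∂P) / mgf Y P s) s := fun s =>
    (hasDerivAt_mgf (hmem s)).log (hpos s).ne'
  have hH : ∀ s, 0 < s → HasDerivAt (fun s => cgf Y P s / s - a / 2 * cgf Y P s)
      (((∫ x, Y x * Real.exp (s * Y x) ∂P) / mgf Y P s * s - cgf Y P s * 1) / s ^ 2
        - a / 2 * ((∫ x, Y x * Real.exp (s * Y x) ∂P) / mgf Y P s)) s := fun s hs =>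
    ((hG s).div (hasDerivAt_id s) hs.ne').sub ((hG s).const_mul _)
  have hanti : AntitoneOn (fun s => cgf Y P s / s - a / 2 * cgf Y P s) (Set.Ioi 0) := by
    refine antitoneOn_of_deriv_nonpos (convex_Ioi 0)
      (fun s hs => (hH s hs).continuousAt.continuousWithinAt)
      (fun s hs => (hH s (by simpa using hs)).differentiableAt.differentiableWithinAt) ?_
    intro s hs
    have hs : 0 < s := by simpa using hs
    rw [(hH s hs).deriv]
    have h := hent s hs
    have hp := hpos s
    set I := ∫ x, Y x * Real.exp (s * Y x) ∂P
    have hc : cgf Y P s = Real.log (mgf Y P s) := rfl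
    rw [hc]
    set m := mgf Y P s
    have : (I / m * s - Real.log m * 1) / s ^ 2 - a / 2 * (I / m)
        = (s * I - m * Real.log m - a * s ^ 2 / 2 * I) / (m * s ^ 2) := by
      field_simp
    rw [this]
    exact div_nonpos_of_nonpos_of_nonneg (by linarith) (by positivity)
  have h0 : cgf Y P 0 = 0 := by simp [cgf]
  have hlim : Filter.Tendsto (fun s => cgf Y P s / s - a / 2 * cgf Y P s) (nhdsWithin 0 (Set.Ioi 0))
      (nhds (∫ x, Y x ∂P)) := by
    have hd := (hG 0)
    have h1 := hd.hasDerivWithinAt (s := Set.Ioi 0)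
    rw [hasDerivWithinAt_iff_tendsto_slope' (by simp)] at h1
    have h2 : Filter.Tendsto (fun s => a / 2 * cgf Y P s) (nhdsWithin 0 (Set.Ioi 0)) (nhds 0) := by
      have := (hd.continuousAt.tendsto.const_mul (a / 2)).mono_left
        (nhdsWithin_le_nhds (s := Set.Ioi (0 : ℝ)))
      simpa [h0] using this
    have h3 := h1.sub h2
    simp only [zero_mul, Real.exp_zero, mul_one, mgf_zero, div_one, sub_zero] at h3
    refine h3.congr fun s => ?_
    simp [slope_def_field, h0]
  refine ge_of_tendsto hlim ?_
  filter_upwards [Ioo_mem_nhdsGT hβ] with s hs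
  exact hanti hs.1 hβ hs.2.le

/-! ### Essential infimum over one coordinate -/

/-- The essential infimum of `Y` over its `k`-th coordinate; a measurable substitute for the
pointwise infimum. -/
noncomputable def coordInf (μ : Fin n → Measure 𝒳) (Y : (Fin n → 𝒳) → ℝ) (k : Fin n)
    (X : Fin n → 𝒳) : ℝ :=
  essInf (fun y => Y (update X k y)) (μ k)

section CoordInf

variable {Y : (Fin n → 𝒳) → ℝ} {M : ℝ}

lemma coordInf_le_ae (hYb : ∀ X, 0 ≤ Y X ∧ Y X ≤ M) (k : Fin n) (X) :
    ∀ᵐ y ∂μ k, coordInf μ Y k X ≤ Y (update X k y) :=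
  ae_essInf_le (Filter.isBoundedUnder_of ⟨0, fun _ => (hYb _).1⟩)

lemma le_coordInf [∀ k, IsProbabilityMeasure (μ k)]
    (hYb : ∀ X, 0 ≤ Y X ∧ Y X ≤ M) (k : Fin n) (X) {c : ℝ}
    (h : ∀ᵐ y ∂μ k, c ≤ Y (update X k y)) : c ≤ coordInf μ Y k X :=
  le_essInf_of_ae_le c h
    (Filter.IsBoundedUnder.isCoboundedUnder_ge (Filter.isBoundedUnder_of ⟨M, fun _ => (hYb _).2⟩))

lemma coordInf_mem [∀ k, IsProbabilityMeasure (μ k)]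
    (hYb : ∀ X, 0 ≤ Y X ∧ Y X ≤ M) (k : Fin n) (X) :
    0 ≤ coordInf μ Y k X ∧ coordInf μ Y k X ≤ M := by
  refine ⟨le_coordInf hYb k X (.of_forall fun _ => (hYb _).1), ?_⟩
  obtain ⟨y, hy⟩ := (coordInf_le_ae (μ := μ) hYb k X).exists
  exact hy.trans (hYb _).2

lemma measurable_coordInf [∀ k, IsProbabilityMeasure (μ k)]
    (hY : Measurable Y) (hYb : ∀ X, 0 ≤ Y X ∧ Y X ≤ M) (k : Fin n) :
    Measurable (coordInf μ Y k) := by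
  refine measurable_of_Ici fun c => ?_
  have hs : MeasurableSet {p : (Fin n → 𝒳) × 𝒳 | Y (update p.1 k p.2) < c} :=
    (hY.comp (measurable_update' (a := k) (X := fun _ : Fin n => 𝒳))) measurableSet_Iio
  have : coordInf μ Y k ⁻¹' Set.Ici c
      = (fun X => μ k (Prod.mk X ⁻¹' {p : (Fin n → 𝒳) × 𝒳 | Y (update p.1 k p.2) < c})) ⁻¹' {0} := by
    ext X
    have hiff : μ k (Prod.mk X ⁻¹' {p : (Fin n → 𝒳) × 𝒳 | Y (update p.1 k p.2) < c}) = 0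
        ↔ ∀ᵐ y ∂μ k, c ≤ Y (update X k y) := by
      rw [ae_iff]; simp
    rw [Set.mem_preimage, Set.mem_preimage, Set.mem_singleton_iff, hiff, Set.mem_Ici]
    constructor
    · intro h
      filter_upwards [coordInf_le_ae (μ := μ) hYb k X] with y hy using h.trans hy
    · exact le_coordInf hYb k X
  rw [this]
  exact measurable_measure_prodMk_left hs (measurableSet_singleton 0)

lemma coordInf_update (k : Fin n) (X) (z : 𝒳) :
    coordInf μ Y k (update X k z) = coordInf μ Y k X := by
  simp [coordInf]

lemma coordInf_le [∀ k, IsProbabilityMeasure (μ k)]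
    (hY : Measurable Y) (hYb : ∀ X, 0 ≤ Y X ∧ Y X ≤ M) (k : Fin n) :
    ∀ᵐ X ∂Measure.pi μ, coordInf μ Y k X ≤ Y X := by
  have hp := measurePreserving_update (μ := μ) k
  have hs : MeasurableSet {X | coordInf μ Y k X ≤ Y X} :=
    measurableSet_le (measurable_coordInf hY hYb k) hY
  rw [← hp.map_eq, ae_map_iff hp.measurable.aemeasurable hs]
  have hs' := hp.measurable hs
  refine (Measure.ae_prod_iff_ae_ae hs').2 (.of_forall fun X => ?_)
  filter_upwards [coordInf_le_ae (μ := μ) hYb k X] with y hy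
  rwa [← coordInf_update k X y] at hy

end CoordInf

/-! ### Clipping -/

/-- Clipping to `[0, M]`. -/
noncomputable def clip (M x : ℝ) : ℝ := max 0 (min x M)

lemma clip_mono (M : ℝ) : Monotone (clip M) := fun _ _ h =>
  max_le_max le_rfl (min_le_min_right M h)

lemma clip_mem {M : ℝ} (hM : 0 ≤ M) (x : ℝ) : 0 ≤ clip M x ∧ clip M x ≤ M :=
  ⟨le_max_left _ _, max_le hM (min_le_right _ _)⟩

/-- Clipping preserves self-boundedness. When `z > M`, replacing `z` by `M` shrinks each difference
at least by the factor `M / z`. -/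
lemma clip_selfBounding {ι : Type*} [Fintype ι] {M a z : ℝ} {w v : ι → ℝ} (hM : 0 < M) (ha : 0 < a)
    (h : ∑ k, (z - w k) ^ 2 ≤ a * z) (hwv : ∀ k, clip M (w k) ≤ v k) (hv : ∀ k, v k ≤ clip M z) :
    ∑ k, (clip M z - v k) ^ 2 ≤ a * clip M z := by
  have hz : 0 ≤ z := by
    have : 0 ≤ a * z := (Finset.sum_nonneg fun k _ => sq_nonneg _).trans h
    exact nonneg_of_mul_nonneg_right this ha
  have h1 : ∀ k, (clip M z - v k) ^ 2 ≤ (clip M z - clip M (w k)) ^ 2 := fun k => by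
    have := hwv k; have := hv k
    apply pow_le_pow_left₀ <;> linarith
  have h1' : ∀ k, 0 ≤ clip M z - clip M (w k) := fun k => by
    have := hwv k; have := hv k; linarith
  rcases le_or_gt z M with hzM | hzM
  · have hc : clip M z = z := by simp [clip, hzM, hz]
    rw [hc] at hv h1 h1' ⊢
    refine (Finset.sum_le_sum fun k _ => (h1 k).trans ?_).trans h
    have h2 := h1' k
    have h3 : z - clip M (w k) ≤ |z - w k| := by
      rcases le_or_gt (w k) M with hw | hw
      · have : w k ≤ clip M (w k) := by simp [clip, hw]
        exact (by linarith : z - clip M (w k) ≤ z - w k).trans (le_abs_self _)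
      · have : clip M (w k) = M := by simp [clip, hw.le, hM.le]
        rw [this]; linarith [abs_nonneg (z - w k)]
    rw [← sq_abs (z - w k)]
    exact pow_le_pow_left₀ h2 h3 2
  · have hc : clip M z = M := by simp [clip, hzM.le, hM.le]
    rw [hc] at hv h1 h1' ⊢
    have hz0 : 0 < z := hM.trans hzM
    have h4 : ∀ k, (M - clip M (w k)) ^ 2 ≤ (M / z) ^ 2 * (z - w k) ^ 2 := fun k => by
      have h2 := h1' k
      rw [← mul_pow]
      rcases le_or_gt (w k) M with hw | hw
      · refine pow_le_pow_left₀ h2 ?_ 2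
        have hcl : clip M (w k) = max 0 (w k) := by simp [clip, hw]
        have e : M / z * (z - w k) = M - M / z * w k := by field_simp
        have hr : M / z ≤ 1 := (div_le_one hz0).2 hzM.le
        have hr0 : 0 < M / z := by positivity
        rw [hcl, e]
        rcases le_total 0 (w k) with h0 | h0
        · rw [max_eq_right h0]; nlinarith
        · rw [max_eq_left h0]; nlinarith
      · have : clip M (w k) = M := by simp [clip, hw.le, hM.le]
        rw [this]; simp only [sub_self, ne_eq, OfNat.ofNat_ne_zero, not_false_eq_true, zero_pow]
        positivity
    calc _ ≤ ∑ k, (M / z) ^ 2 * (z - w k) ^ 2 := Finset.sum_le_sum fun k _ => (h1 k).trans (h4 k)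
      _ = (M / z) ^ 2 * ∑ k, (z - w k) ^ 2 := by rw [Finset.mul_sum]
      _ ≤ (M / z) ^ 2 * (a * z) := mul_le_mul_of_nonneg_left h (by positivity)
      _ = a * M * (M / z) := by field_simp
      _ ≤ a * M * 1 := mul_le_mul_of_nonneg_left ((div_le_one hz0).2 hzM.le) (by positivity)
      _ = a * M := mul_one _

end SelfBounding

/-- **Concentration for self-bounding random variables, upper tail** (Theorem 8, second part):
if `Z` satisfies only the self-boundedness condition
`∑ₖ (Z(X) - inf_y Z(X_{y,k}))² ≤ a Z(X)` almost surely, with `a ≥ 1`, then for `t > 0`,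
`Pr{Z - 𝔼Z > t} ≤ exp(-t² / (2a 𝔼Z + a t))`. -/
theorem self_bounding_upper_tail (𝒳 : Type*) [MeasurableSpace 𝒳] [Nonempty 𝒳]
    (n : ℕ) (μ : Fin n → Measure 𝒳) [∀ k, IsProbabilityMeasure (μ k)]
    (Z : (Fin n → 𝒳) → ℝ) (hZ : Measurable Z)
    (hint : Integrable Z (Measure.pi μ)) (a : ℝ) (ha : 1 ≤ a)
    (h2 : ∀ᵐ X ∂Measure.pi μ,
      ∑ k, (Z X - ⨅ y, Z (Function.update X k y)) ^ 2 ≤ a * Z X)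
    (t : ℝ) (ht : 0 < t) :
    ((Measure.pi μ) {X | Z X - (∫ x, Z x ∂Measure.pi μ) > t}).toReal ≤
      Real.exp (-t ^ 2 / (2 * a * (∫ x, Z x ∂Measure.pi μ) + a * t)) := by
  open SelfBounding ProbabilityTheory in
  have ha0 : 0 < a := by linarith
  have hZ0 : 0 ≤ᵐ[Measure.pi μ] Z := by
    filter_upwards [h2] with X hX
    have : 0 ≤ a * Z X := (Finset.sum_nonneg fun k _ => sq_nonneg _).trans hX
    exact nonneg_of_mul_nonneg_right this ha0
  set E := ∫ x, Z x ∂Measure.pi μ with hE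
  have hE0 : 0 ≤ E := integral_nonneg_of_ae hZ0
  -- If `E = 0` then `Z = 0` almost surely, so the event is null.
  rcases hE0.eq_or_lt with hE_zero | hEpos
  · have hz : Z =ᵐ[Measure.pi μ] 0 := (integral_eq_zero_iff_of_nonneg_ae hZ0 hint).1 hE_zero.symm
    have : (Measure.pi μ) {X | Z X - E > t} = 0 := by
      rw [← compl_compl {X | Z X - E > t}]
      change ∀ᵐ X ∂Measure.pi μ, ¬ (Z X - E > t)
      filter_upwards [hz] with X hX
      rw [hX, ← hE_zero]; simp [ht.le]
    rw [this]
    exact (Real.exp_pos _).le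
  -- After clipping at level `E + t`, the event is still contained in `E + t ≤ Y`.
  let Y : (Fin n → 𝒳) → ℝ := fun X => clip (E + t) (Z X)
  have hM : 0 < E + t := by linarith
  have hY : Measurable Y := measurable_const.max (hZ.min measurable_const)
  have hYb : ∀ X, 0 ≤ Y X ∧ Y X ≤ E + t := fun X => clip_mem hM.le _
  -- If the infimum is over a set unbounded below, its junk value `0` is still harmless after
  -- clipping.
  have hinf : ∀ k X y, clip (E + t) (⨅ y, Z (Function.update X k y))
      ≤ Y (Function.update X k y) := by
    intro k X y
    by_cases hb : BddBelow (Set.range fun y => Z (Function.update X k y))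
    · exact clip_mono _ (ciInf_le hb y)
    · rw [Real.iInf_of_not_bddBelow hb]
      have : clip (E + t) 0 = 0 := by simp [clip, hM.le]
      rw [this]
      exact (hYb _).1
  have hsb : ∀ᵐ X ∂Measure.pi μ, ∑ k, (Y X - coordInf μ Y k X) ^ 2 ≤ a * Y X := by
    filter_upwards [h2, ae_all_iff.2 fun k => coordInf_le (μ := μ) hY hYb k] with X hX hle
    exact clip_selfBounding hM ha0 hX
      (fun k => le_coordInf hYb k X (.of_forall (hinf k X))) hle
  have hEY : ∫ X, Y X ∂Measure.pi μ ≤ E := by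
    refine integral_mono_ae (integrable_of_bdd hY _ _ hYb) hint ?_
    filter_upwards [hZ0] with X hX
    exact max_le hX (min_le_left _ _)
  -- The standard choice for the Bernstein-type bound `exp (-β t + v β² / (2 (1 - c β)))`, namely
  -- `β = t / (v + c t)`, with `v = a E` and `c = a / 2`.
  let β := t / (a * E + a / 2 * t)
  have hD : 0 < a * E + a / 2 * t := by positivity
  have hβ : 0 < β := div_pos ht hD
  have hcgf := cgf_le hY hYb (fun β hβ => entropy_exp_le (μ := μ) (a := a) hY
    (measurable_coordInf hY hYb) hYb (coordInf_mem hYb) coordInf_update (coordInf_le hY hYb) hsb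
    hβ.le) hβ
  have hie : Integrable (fun X => Real.exp (β * Y X)) (Measure.pi μ) :=
    integrable_of_bdd (hY.const_mul β).exp 0 (Real.exp (β * (E + t))) fun X =>
      ⟨(Real.exp_pos _).le, Real.exp_le_exp.2 (mul_le_mul_of_nonneg_left (hYb X).2 hβ.le)⟩
  have hch := measure_ge_le_exp_cgf (μ := Measure.pi μ) (X := Y) (E + t) hβ.le hie
  have hsub : ((Measure.pi μ) {X | Z X - E > t}).toReal
      ≤ (Measure.pi μ).real {X | E + t ≤ Y X} := by
    refine measureReal_mono fun X hX => ?_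
    have hX : Z X - E > t := hX
    change E + t ≤ max 0 (min (Z X) (E + t))
    exact le_max_of_le_right (le_min (by linarith) le_rfl)
  refine hsub.trans (hch.trans (Real.exp_le_exp.2 ?_))
  have h5 : cgf Y (Measure.pi μ) β / β - a / 2 * cgf Y (Measure.pi μ) β
      = cgf Y (Measure.pi μ) β * (a * E / t) := by
    simp only [β]; field_simp; ring
  rw [h5] at hcgf
  have h6 : cgf Y (Measure.pi μ) β ≤ t / a := by
    have h7 : cgf Y (Measure.pi μ) β * (a * E / t) ≤ t / a * (a * E / t) := by
      refine (hcgf.trans hEY).trans_eq ?_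
      field_simp
    exact le_of_mul_le_mul_right h7 (by positivity)
  have h8 : -β * (E + t) + t / a = -t ^ 2 / (2 * a * E + a * t) := by
    have : 2 * a * E + a * t ≠ 0 := by positivity
    have h9 : β = 2 * t / (2 * a * E + a * t) := by
      simp only [β]; field_simp
    rw [h9]; field_simp; ring
  linarith
end

section
/- Let X and Y be i.i.d. random variables with values in an interval [a, a+1] of length 1. Then E_X[ (E_Y[(X − Y)²])² ] ≤ (1/2) · E[(X − Y)²]. -/
open MeasureTheory

/-!
For `X, Y` i.i.d. with law `μ` and moments `mₖ = ∫ x ^ k ∂μ`, expanding both sides gives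
`𝔼_X (𝔼_Y (X - Y)²)² = m₄ - 4 m₁ m₃ + 3 m₂² = (1/2) 𝔼 (X - Y)⁴`.
Almost surely `|X - Y| ≤ 1`, so `(X - Y)⁴ ≤ (X - Y)²`, and the claim follows by monotonicity of the
integral.
-/

lemma integrable_pow_of_ae_mem_Icc {a : ℝ} {μ : Measure ℝ} [IsProbabilityMeasure μ]
    (hrange : ∀ᵐ x ∂μ, x ∈ Set.Icc a (a + 1)) (k : ℕ) : Integrable (fun x : ℝ => x ^ k) μ := by
  refine Integrable.of_bound (by fun_prop) ((|a| + 1) ^ k) ?_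
  filter_upwards [hrange] with x hx
  rw [norm_pow, Real.norm_eq_abs]
  gcongr
  rw [abs_le]
  constructor
  · linarith [hx.1, neg_abs_le a]
  · linarith [hx.2, le_abs_self a]

lemma integrable_quartic {μ : Measure ℝ} (h : ∀ k : ℕ, Integrable (fun x : ℝ => x ^ k) μ)
    (c₀ c₁ c₂ c₃ c₄ : ℝ) :
    Integrable (fun x => c₀ * x ^ 0 + c₁ * x ^ 1 + c₂ * x ^ 2 + c₃ * x ^ 3 + c₄ * x ^ 4) μ :=
  (((((h 0).const_mul c₀).add ((h 1).const_mul c₁)).add ((h 2).const_mul c₂)).add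
    ((h 3).const_mul c₃)).add ((h 4).const_mul c₄)

lemma integral_quartic {μ : Measure ℝ} [IsProbabilityMeasure μ]
    (h : ∀ k : ℕ, Integrable (fun x : ℝ => x ^ k) μ) (c₀ c₁ c₂ c₃ c₄ : ℝ) :
    ∫ x, (c₀ * x ^ 0 + c₁ * x ^ 1 + c₂ * x ^ 2 + c₃ * x ^ 3 + c₄ * x ^ 4) ∂μ =
      c₀ + c₁ * ∫ x, x ^ 1 ∂μ + c₂ * ∫ x, x ^ 2 ∂μ + c₃ * ∫ x, x ^ 3 ∂μ + c₄ * ∫ x, x ^ 4 ∂μ := by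
  have h0 := (h 0).const_mul c₀
  have h1 := h0.add ((h 1).const_mul c₁)
  have h2 := h1.add ((h 2).const_mul c₂)
  have h3 := h2.add ((h 3).const_mul c₃)
  have e4 := integral_add h3 ((h 4).const_mul c₄)
  have e3 := integral_add h2 ((h 3).const_mul c₃)
  have e2 := integral_add h1 ((h 2).const_mul c₂)
  have e1 := integral_add h0 ((h 1).const_mul c₁)
  simp only [Pi.add_apply, integral_const_mul] at e1 e2 e3 e4
  rw [e4, e3, e2, e1]
  simp

/-- **Lemma 9**: if `X, Y` are i.i.d. random variables with values in an interval `[a, a+1]`,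
then `𝔼_X [𝔼_Y (X - Y)²]² ≤ (1/2) 𝔼 (X - Y)²`. -/
theorem lemma_tedious (a : ℝ) (μ : Measure ℝ) [IsProbabilityMeasure μ]
    (hrange : ∀ᵐ x ∂μ, x ∈ Set.Icc a (a + 1)) :
    ∫ x, (∫ y, (x - y) ^ 2 ∂μ) ^ 2 ∂μ ≤ (1 / 2) * ∫ x, ∫ y, (x - y) ^ 2 ∂μ ∂μ := by
  have h := integrable_pow_of_ae_mem_Icc hrange
  have hI := integrable_quartic h
  have hE := integral_quartic h
  set m₁ := ∫ x, x ^ 1 ∂μ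
  set m₂ := ∫ x, x ^ 2 ∂μ
  set m₃ := ∫ x, x ^ 3 ∂μ
  set m₄ := ∫ x, x ^ 4 ∂μ
  have p2 (x y : ℝ) : (x - y) ^ 2 =
      x ^ 2 * y ^ 0 + (-2 * x) * y ^ 1 + 1 * y ^ 2 + 0 * y ^ 3 + 0 * y ^ 4 := by ring
  have p4 (x y : ℝ) : (x - y) ^ 4 =
      x ^ 4 * y ^ 0 + (-4 * x ^ 3) * y ^ 1 + (6 * x ^ 2) * y ^ 2 + (-4 * x) * y ^ 3
        + 1 * y ^ 4 := by ring
  have i2 (x : ℝ) : ∫ y, (x - y) ^ 2 ∂μ =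
      m₂ * x ^ 0 + (-2 * m₁) * x ^ 1 + 1 * x ^ 2 + 0 * x ^ 3 + 0 * x ^ 4 := by
    simp_rw [p2 x, hE]; ring
  have i4 (x : ℝ) : ∫ y, (x - y) ^ 4 ∂μ =
      m₄ * x ^ 0 + (-4 * m₃) * x ^ 1 + (6 * m₂) * x ^ 2 + (-4 * m₁) * x ^ 3 + 1 * x ^ 4 := by
    simp_rw [p4 x, hE]; ring
  have hL : ∫ x, (∫ y, (x - y) ^ 2 ∂μ) ^ 2 ∂μ = (1 / 2) * ∫ x, ∫ y, (x - y) ^ 4 ∂μ ∂μ := by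
    have s (x : ℝ) : (∫ y, (x - y) ^ 2 ∂μ) ^ 2 =
        m₂ ^ 2 * x ^ 0 + (-4 * m₁ * m₂) * x ^ 1 + (4 * m₁ ^ 2 + 2 * m₂) * x ^ 2
          + (-4 * m₁) * x ^ 3 + 1 * x ^ 4 := by rw [i2]; ring
    simp_rw [s, i4, hE]; ring
  rw [hL]
  refine mul_le_mul_of_nonneg_left ?_ (by norm_num)
  refine integral_mono_ae (by simp_rw [i4]; exact hI ..) (by simp_rw [i2]; exact hI ..) ?_
  filter_upwards [hrange] with x hx
  refine integral_mono_ae (by simp_rw [p4 x]; exact hI ..) (by simp_rw [p2 x]; exact hI ..) ?_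
  filter_upwards [hrange] with y hy
  have hxy : (x - y) ^ 2 ≤ 1 := by
    rw [sq_le_one_iff_abs_le_one, abs_le]
    constructor <;> linarith [hx.1, hx.2, hy.1, hy.2]
  change (x - y) ^ 4 ≤ (x - y) ^ 2
  nlinarith [sq_nonneg (x - y)]
end

section
/- Suppose x_1, ..., x_n are real numbers in [0,1]. Then (1/n) ∑_{k=1}^n ( (1/n) ∑_{j=1}^n (x_k − x_j)² )² ≤ (1/(2n²)) ∑_{k=1}^n ∑_{j=1}^n (x_k − x_j)². -/
/-!
Let `m` be the mean of the `x i`, `y i = x i - m`, and let `V` be the mean of the `y i ^ 2`.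
Since `(1/n) ∑ⱼ (xₖ - xⱼ)² = yₖ² + V`, the claim becomes `(1/n) ∑ yₖ⁴ + 3 V² ≤ V`, that is,
`∑ g(yₖ) ≥ 0` for `g(y) = 3 V² + (1 - 6 V) y² - y⁴`. A centred distribution is a mixture of
centred two-point distributions, so it suffices to test `g` on those (`sum_nonneg_of_pairs`).
For a two-point distribution on `{-s, t}` with `s, t > 0`,
`t g(-s) + s g(t) = (s + t) (3 (V - s t)² + s t (1 - (s + t)²))`,
which is nonnegative because `s + t ≤ 1`.
-/

/-- To show that `∑ G i ≥ 0` when the weights `y i` sum to zero, it suffices to check the two-point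
combinations that balance a negative `y i` against a positive `y j`. These conditions produce a
multiplier `β` with `G i + β * y i ≥ 0` for every `i`. -/
lemma sum_nonneg_of_pairs {n : ℕ} (y G : Fin n → ℝ) (hy : ∑ i, y i = 0)
    (h0 : ∀ i, y i = 0 → 0 ≤ G i)
    (hp : ∀ i j, y i < 0 → 0 < y j → 0 ≤ y j * G i + (-y i) * G j) :
    0 ≤ ∑ i, G i := by
  by_cases hneg : ∃ i, y i < 0
  · by_cases hpos : ∃ j, 0 < y j
    · obtain ⟨i₀, hi₀⟩ := hneg
      obtain ⟨j₀, hj₀⟩ := hpos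
      obtain ⟨β, hβ₁, hβ₂⟩ := exists_between_of_forall_le
        (s := {r | ∃ j, 0 < y j ∧ r = -G j / y j})
        (t := {r | ∃ i, y i < 0 ∧ r = G i / (-y i)})
        ⟨_, j₀, hj₀, rfl⟩ ⟨_, i₀, hi₀, rfl⟩ (by
          rintro _ ⟨j, hj, rfl⟩ _ ⟨i, hi, rfl⟩
          rw [div_le_div_iff₀ hj (by linarith)]
          linarith [hp i j hi hj])
      have key : ∀ i, 0 ≤ G i + β * y i := by
        intro i
        rcases lt_trichotomy (y i) 0 with h | h | h
        · have h1 := hβ₂ ⟨i, h, rfl⟩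
          rw [le_div_iff₀ (by linarith)] at h1
          linarith
        · rw [h]; linarith [h0 i h]
        · have h1 := hβ₁ ⟨i, h, rfl⟩
          rw [div_le_iff₀ h] at h1
          linarith
      have h2 : 0 ≤ ∑ i, (G i + β * y i) := Finset.sum_nonneg fun i _ => key i
      rw [Finset.sum_add_distrib, ← Finset.mul_sum, hy] at h2
      linarith
    · push Not at hpos
      have hz := (Finset.sum_eq_zero_iff_of_nonpos fun i _ => hpos i).1 hy
      exact Finset.sum_nonneg fun i hi => h0 i (hz i hi)
  · push Not at hneg
    have hz := (Finset.sum_eq_zero_iff_of_nonneg fun i _ => hneg i).1 hy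
    exact Finset.sum_nonneg fun i hi => h0 i (hz i hi)

/-- **Corollary 10**: for `x₁, …, xₙ ∈ [0,1]`,
`(1/n) ∑ₖ ((1/n) ∑ⱼ (xₖ - xⱼ)²)² ≤ (1/(2n²)) ∑ₖ ∑ⱼ (xₖ - xⱼ)²`. -/
theorem corollary_tedious (n : ℕ) (x : Fin n → ℝ)
    (hx : ∀ i, x i ∈ Set.Icc (0 : ℝ) 1) :
    (1 / (n : ℝ)) * ∑ k, ((1 / (n : ℝ)) * ∑ j, (x k - x j) ^ 2) ^ 2 ≤
      (1 / (2 * (n : ℝ) ^ 2)) * ∑ k, ∑ j, (x k - x j) ^ 2 := by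
  rcases Nat.eq_zero_or_pos n with rfl | hn
  · simp
  have hn' : (0 : ℝ) < n := by exact_mod_cast hn
  obtain ⟨m, hm⟩ : ∃ m : ℝ, n * m = ∑ i, x i := ⟨(∑ i, x i) / n, by field_simp⟩
  obtain ⟨y, hyx⟩ : ∃ y : Fin n → ℝ, ∀ i, y i = x i - m := ⟨_, fun _ => rfl⟩
  obtain ⟨V, hV⟩ : ∃ V : ℝ, n * V = ∑ i, y i ^ 2 := ⟨(∑ i, y i ^ 2) / n, by field_simp⟩
  have hy : ∑ i, y i = 0 := by
    simp [hyx, Finset.sum_sub_distrib, hm]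
  have hrow : ∀ k, ∑ j, (x k - x j) ^ 2 = n * (y k ^ 2 + V) := by
    intro k
    have h : ∀ j, (x k - x j) ^ 2 = y k ^ 2 - 2 * y k * y j + y j ^ 2 := by
      intro j; rw [hyx, hyx]; ring
    simp only [h, Finset.sum_add_distrib, Finset.sum_sub_distrib, ← Finset.mul_sum, hy, ← hV]
    simp
    ring
  have hmain : 0 ≤ ∑ i, (3 * V ^ 2 + (1 - 6 * V) * y i ^ 2 - y i ^ 4) := by
    apply sum_nonneg_of_pairs y _ hy
    · intro i hi
      rw [hi]; nlinarith [sq_nonneg V]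
    · intro i j hi hj
      have hL : y j - y i ≤ 1 := by
        rw [hyx, hyx]; linarith [(hx i).1, (hx j).2]
      have hL2 : (y j - y i) ^ 2 ≤ 1 := by nlinarith
      have h1 : 0 ≤ (y j - y i) * (3 * (V - (-y i) * y j) ^ 2
          + ((-y i) * y j) * (1 - (y j - y i) ^ 2)) := by
        have : 0 ≤ (-y i) * y j := mul_nonneg (by linarith) hj.le
        exact mul_nonneg (by linarith)
          (add_nonneg (by positivity) (mul_nonneg this (by linarith)))
      convert h1 using 1
      ring
  simp only [Finset.sum_add_distrib, Finset.sum_sub_distrib, ← Finset.mul_sum, ← hV,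
    Finset.sum_const, Finset.card_univ, Fintype.card_fin, nsmul_eq_mul] at hmain
  have hD : ∀ k, (1 / (n : ℝ) * (n * (y k ^ 2 + V))) ^ 2
      = y k ^ 4 + 2 * V * y k ^ 2 + V ^ 2 := by
    intro k; field_simp; ring
  simp only [hrow, hD]
  simp only [Finset.sum_add_distrib, ← Finset.mul_sum, ← hV,
    Finset.sum_const, Finset.card_univ, Fintype.card_fin, nsmul_eq_mul]
  have hR : 1 / (2 * (n : ℝ) ^ 2) * (n * (n * V + n * V)) = V := by field_simp; ring
  rw [hR, one_div, inv_mul_le_iff₀ hn']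
  linarith
end
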